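/- Let p and q be positive integers and let τ be a permutation of [p+q] which is (p,q)-connected. Then #(τ) + #(τ⁻¹γ) ≤ p+q, and τ belongs to S_ann-nc(p,q) if and only if #(τ) + #(τ⁻¹γ) = p+q. -/

import Mathlib

/-- The permutation induced by `f` on the subset `B`: an element `b` is sent to the first
element of the sequence `f b, f (f b), f (f (f b)), ...` that lies in `B`
(and is left fixed if no iterate ever returns to `B`). -/
noncomputable def induced {α : Type*} (f : α → α) (B : Set α) (b : α) : α := by
  classical
  exact if h : ∃ k, 0 < k ∧ f^[k] b ∈ B then f^[Nat.find h] b else b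

/-- `A` is an orbit of the permutation `τ`. -/
def IsOrbit {α : Type*} (τ : Equiv.Perm α) (A : Set α) : Prop :=
  ∃ a, A = {b | τ.SameCycle a b}

/-- The number of orbits of `τ` (fixed points count as orbits). -/
noncomputable def numOrbits {α : Type*} (τ : Equiv.Perm α) : ℕ :=
  Set.ncard {A : Set α | IsOrbit τ A}

/-- `induced f S` acts on `a, b, c` as the 3-cycle `(a, b, c)`. -/
def MapsCyc3 {α : Type*} (f : α → α) (S : Set α) (a b c : α) : Prop :=
  induced f S a = b ∧ induced f S b = c ∧ induced f S c = a

/-- `induced f S` acts on `a, b, c, d` as the 4-cycle `(a, b, c, d)`. -/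
def MapsCyc4 {α : Type*} (f : α → α) (S : Set α) (a b c d : α) : Prop :=
  induced f S a = b ∧ induced f S b = c ∧ induced f S c = d ∧ induced f S d = a

/-- `induced f S` acts on `a, b, c, d` as the product of transpositions `(a, c)(b, d)`. -/
def MapsSwap2 {α : Type*} (f : α → α) (S : Set α) (a b c d : α) : Prop :=
  induced f S a = c ∧ induced f S c = a ∧ induced f S b = d ∧ induced f S d = b

/-- `induced f S` acts on `x, y` as the transposition `(x, y)`. -/
def MapsSwap {α : Type*} (f : α → α) (S : Set α) (x y : α) : Prop :=
  induced f S x = y ∧ induced f S y = x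

/-- `σ` is standard with respect to the "forward cycle" `γ₀`, i.e. `σ∣B = γ₀∣B` for
every orbit `B` of `σ`. -/
def DiscStandardRel {n : ℕ} (γ₀ σ : Equiv.Perm (Fin n)) : Prop :=
  ∀ A : Set (Fin n), IsOrbit σ A → ∀ b ∈ A, induced (⇑σ) A b = induced (⇑γ₀) A b

/-- The orbit partition of `σ` has no crossing: there are no `a < b < c < d` with
`a, c` in one orbit and `b, d` in a different orbit. -/
def OrbitsNoCrossing {n : ℕ} (σ : Equiv.Perm (Fin n)) : Prop :=
  ¬ ∃ a b c d : Fin n, a < b ∧ b < c ∧ c < d ∧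
      σ.SameCycle a c ∧ σ.SameCycle b d ∧ ¬ σ.SameCycle a b

/-- Disc non-crossing relative to a given forward cycle `γ₀`. -/
def DiscNCRel {n : ℕ} (γ₀ σ : Equiv.Perm (Fin n)) : Prop :=
  DiscStandardRel γ₀ σ ∧ OrbitsNoCrossing σ

/-- The set `S_disc-nc(n)` of disc non-crossing permutations of `[n]`
(here `[n] = {1, …, n}` is modelled by `Fin n`, and the forward cycle
`γ₀ = (1, 2, …, n)` is `finRotate n`). -/
def DiscNC {n : ℕ} (σ : Equiv.Perm (Fin n)) : Prop :=
  DiscNCRel (finRotate n) σ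

/-- The external points `{1, …, p}` (0-indexed: values `< p`). -/
def extSet (p q : ℕ) : Set (Fin (p + q)) := {i | (i : ℕ) < p}

/-- The internal points `{p+1, …, p+q}` (0-indexed: values `≥ p`). -/
def intSet (p q : ℕ) : Set (Fin (p + q)) := {i | p ≤ (i : ℕ)}

/-- `γ_ext = (1, 2, …, p)`, the forward cycle on the external points. -/
def gammaExt (p q : ℕ) : Equiv.Perm (Fin (p + q)) :=
  ((List.finRange (p + q)).take p).formPerm

/-- `γ_int = (p+1, p+2, …, p+q)`, the forward cycle on the internal points. -/
def gammaInt (p q : ℕ) : Equiv.Perm (Fin (p + q)) :=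
  ((List.finRange (p + q)).drop p).formPerm

/-- `γ = γ_ext · γ_int`. -/
def gammaAnn (p q : ℕ) : Equiv.Perm (Fin (p + q)) := gammaExt p q * gammaInt p q

/-- `λ_{x,y}`: the permutation fixing `x` and `y` and cycling the remaining points as
`(γ_ext(x), γ_ext²(x), …, γ_ext^{p-1}(x), γ_int(y), γ_int²(y), …, γ_int^{q-1}(y))`. -/
def lamPerm (p q : ℕ) (x y : Fin (p + q)) : Equiv.Perm (Fin (p + q)) :=
  (((List.range (p - 1)).map fun k => (gammaExt p q ^ (k + 1)) x) ++
    ((List.range (q - 1)).map fun k => (gammaInt p q ^ (k + 1)) y)).formPerm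

/-- `τ` is standard in `(p,q)`-annular sense. -/
def AnnStandard (p q : ℕ) (τ : Equiv.Perm (Fin (p + q))) : Prop :=
  (∀ A : Set (Fin (p + q)), IsOrbit τ A →
    (∀ b ∈ A ∩ extSet p q,
        induced (⇑τ) (A ∩ extSet p q) b = induced (⇑(gammaExt p q)) (A ∩ extSet p q) b) ∧
    (∀ b ∈ A ∩ intSet p q,
        induced (⇑τ) (A ∩ intSet p q) b = induced (⇑(gammaInt p q)) (A ∩ intSet p q) b)) ∧
  (∀ A : Set (Fin (p + q)), IsOrbit τ A →
    (A ∩ extSet p q).Nonempty → (A ∩ intSet p q).Nonempty →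
    (∃! a, a ∈ A ∩ extSet p q ∧ τ a ∈ intSet p q) ∧
    (∃! a, a ∈ A ∩ intSet p q ∧ τ a ∈ extSet p q))

/-- The annular crossing pattern (AC-1). -/
def AC1 (p q : ℕ) (τ : Equiv.Perm (Fin (p + q))) : Prop :=
  ∃ a b c d : Fin (p + q), List.Pairwise (· ≠ ·) [a, b, c, d] ∧
    MapsCyc4 (⇑(gammaAnn p q)) {a, b, c, d} a b c d ∧
    MapsSwap2 (⇑τ) {a, b, c, d} a b c d

/-- The annular crossing pattern (AC-2). -/
def AC2 (p q : ℕ) (τ : Equiv.Perm (Fin (p + q))) : Prop :=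
  ∃ a b c x y : Fin (p + q), List.Pairwise (· ≠ ·) [a, b, c, x, y] ∧
    x ∈ extSet p q ∧ y ∈ intSet p q ∧
    MapsCyc3 (⇑(lamPerm p q x y)) {a, b, c} a b c ∧
    MapsCyc3 (⇑τ) {a, b, c, x, y} a c b ∧
    MapsSwap (⇑τ) {a, b, c, x, y} x y

/-- The annular crossing pattern (AC-3). -/
def AC3 (p q : ℕ) (τ : Equiv.Perm (Fin (p + q))) : Prop :=
  ∃ a b c d x y : Fin (p + q), List.Pairwise (· ≠ ·) [a, b, c, d, x, y] ∧
    x ∈ extSet p q ∧ y ∈ intSet p q ∧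
    MapsCyc4 (⇑(lamPerm p q x y)) {a, b, c, d} a b c d ∧
    MapsSwap2 (⇑τ) {a, b, c, d, x, y} a b c d ∧
    MapsSwap (⇑τ) {a, b, c, d, x, y} x y

/-- The set `S_ann-nc(p,q)` of `(p,q)`-annular non-crossing permutations. -/
def AnnNC (p q : ℕ) (τ : Equiv.Perm (Fin (p + q))) : Prop :=
  AnnStandard p q τ ∧ ¬ AC1 p q τ ∧ ¬ AC2 p q τ ∧ ¬ AC3 p q τ

/-- A `(p,q)`-connecting set: meets both the external and internal points. -/
def ConnectingBlock (p q : ℕ) (B : Set (Fin (p + q))) : Prop :=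
  (B ∩ extSet p q).Nonempty ∧ (B ∩ intSet p q).Nonempty

/-- `τ` is `(p,q)`-connected: it has a `(p,q)`-connecting orbit. -/
def AnnConnected (p q : ℕ) (τ : Equiv.Perm (Fin (p + q))) : Prop :=
  ∃ A : Set (Fin (p + q)), IsOrbit τ A ∧ ConnectingBlock p q A

/-- A family of blocks has no crossing: no `a < b < c < d` with `a, c` in one block and
`b, d` in a different block. -/
def NoCrossing {n : ℕ} (ρ : Set (Set (Fin n))) : Prop :=
  ¬ ∃ (a b c d : Fin n) (B C : Set (Fin n)), B ∈ ρ ∧ C ∈ ρ ∧ B ≠ C ∧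
      a < b ∧ b < c ∧ c < d ∧ a ∈ B ∧ c ∈ B ∧ b ∈ C ∧ d ∈ C

/-!
Since `τ` is connected, it has an arrow `x ↦ τ x` from an external point to an internal one.
Cutting the annulus along that arrow turns it into a disc: `γ` becomes the single cycle
`γ · (x, γ⁻¹ (τ x))`, and `τ⁻¹γ` acquires exactly one more orbit. The disc inequality
`#(τ) + #(τ⁻¹γ₀) ≤ n + 1` for an `n`-cycle `γ₀` then becomes the annular one, and equality holds
iff `τ` is noncrossing on the cut circle. The conditions defining `S_ann-nc(p,q)` say just this: a
crossing on the cut circle which does not involve the orbit of `x` is an (AC-2) or (AC-3) with the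
connecting pair `x`, `τ x`, one which does is an (AC-1) or, after exchanging roles, an (AC-2) whose
connecting pair lies on the other orbit. Conversely, equality excludes (AC-2) and (AC-3) because
rerouting `τ` so that it maps the pair `x ↦ y` of the pattern preserves equality.
-/

open Equiv Equiv.Perm

section SameCycle

theorem mul_swap_apply_of_not_sameCycle {α : Type*} [DecidableEq α] {σ : Perm α} {u v a : α}
    (h : σ.SameCycle u v) (ha : ¬ σ.SameCycle u a) : (σ * swap u v) a = σ a := by
  rw [mul_apply, swap_apply_of_ne_of_ne]
  · exact fun hau => ha (hau ▸ .rfl)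
  · exact fun hav => ha (hav ▸ h)

variable {α : Type*} [Finite α] {σ : Perm α} {u v a b : α}

theorem sameCycle_induction {P : α → Prop} (hP : ∀ a, P a → P (σ a)) (h : σ.SameCycle a b)
    (ha : P a) : P b := by
  obtain ⟨k, rfl⟩ := h.exists_nat_pow_eq
  clear h
  induction k with
  | zero => exact ha
  | succ k ih => rw [pow_succ', mul_apply]; exact hP _ ih

theorem exists_mem_apply_notMem {S : Set α} (h : σ.SameCycle a b) (ha : a ∈ S) (hb : b ∉ S) :
    ∃ c, σ.SameCycle a c ∧ c ∈ S ∧ σ c ∉ S := by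
  by_contra! hall
  exact hb (sameCycle_induction (P := fun c => σ.SameCycle a c ∧ c ∈ S)
    (fun c hc => ⟨hc.1.apply_right, hall c hc.1 hc.2⟩) h ⟨.rfl, ha⟩).2

variable [DecidableEq α]

theorem sameCycle_mul_swap (h : ¬ σ.SameCycle u v) : (σ * swap u v).SameCycle u v := by
  set σ' := σ * swap u v with hσ'
  by_contra hne
  have hstep (a) (ha : σ.SameCycle v a ∧ σ'.SameCycle u a) :
      σ.SameCycle v (σ a) ∧ σ'.SameCycle u (σ a) := by
    have hau : a ≠ u := by rintro rfl; exact h ha.1.symm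
    have hav : a ≠ v := by rintro rfl; exact hne ha.2
    have hσa : σ' a = σ a := by simp [hσ', swap_apply_of_ne_of_ne hau hav]
    exact ⟨ha.1.apply_right, hσa ▸ ha.2.apply_right⟩
  have hstart : σ'.SameCycle u (σ v) := ⟨1, by simp [hσ']⟩
  exact hne (sameCycle_induction hstep SameCycle.rfl.apply_left
    ⟨SameCycle.rfl.apply_right, hstart⟩).2

-- The cycle of `v` in `σ * swap u v` is the stretch `σ u, σ² u, …, v` of the cycle of `u` in `σ`.
theorem not_sameCycle_mul_swap (huv : u ≠ v) (h : σ.SameCycle u v) :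
    ¬ (σ * swap u v).SameCycle u v := by
  have hex : ∃ k, (σ ^ k) u = v := h.exists_nat_pow_eq
  set k := Nat.find hex
  have hk : (σ ^ k) u = v := Nat.find_spec hex
  have hmin (i) (hi : i < k) : (σ ^ i) u ≠ v := Nat.find_min hex hi
  have hne (i) (hi0 : 0 < i) (hik : i ≤ k) : (σ ^ i) u ≠ u := fun hiu =>
    hmin (k - i) (by omega) <| by
      rw [← hk, ← hiu, ← mul_apply, ← pow_add, Nat.sub_add_cancel hik, hiu]
  have hk0 : 0 < k := Nat.pos_of_ne_zero fun h0 => huv (by simpa [h0] using hk)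
  have hstep (a) (ha : ∃ i, 0 < i ∧ i ≤ k ∧ (σ ^ i) u = a) :
      ∃ i, 0 < i ∧ i ≤ k ∧ (σ ^ i) u = (σ * swap u v) a := by
    obtain ⟨i, hi0, hik, rfl⟩ := ha
    rcases eq_or_lt_of_le hik with rfl | hlt
    · exact ⟨1, one_pos, hk0, by simp [hk]⟩
    · refine ⟨i + 1, by omega, hlt, ?_⟩
      rw [mul_apply, swap_apply_of_ne_of_ne (hne i hi0 hik) (hmin i hlt), pow_succ', mul_apply]
  intro hvu
  obtain ⟨i, hi0, hik, hi⟩ := sameCycle_induction hstep hvu.symm ⟨k, hk0, le_rfl, hk⟩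
  exact hne i hi0 hik hi

theorem sameCycle_or_of_mul_swap (hab : (σ * swap u v).SameCycle a b) :
    σ.SameCycle a b ∨ σ.SameCycle u a ∧ σ.SameCycle v b ∨ σ.SameCycle v a ∧ σ.SameCycle u b := by
  refine sameCycle_induction (P := fun b => σ.SameCycle a b ∨ σ.SameCycle u a ∧ σ.SameCycle v b ∨
    σ.SameCycle v a ∧ σ.SameCycle u b) (fun c hc => ?_) hab (.inl .rfl)
  simp only [mul_apply, sameCycle_apply_right, swap_apply_def]
  have := @SameCycle.symm α σ
  grind [SameCycle.rfl]

theorem sameCycle_of_mul_swap (h : σ.SameCycle u v) (hab : (σ * swap u v).SameCycle a b) :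
    σ.SameCycle a b := by
  rcases sameCycle_or_of_mul_swap hab with hab | ⟨ha, hb⟩ | ⟨ha, hb⟩
  exacts [hab, ha.symm.trans (h.trans hb), ha.symm.trans (h.symm.trans hb)]

theorem sameCycle_mul_swap_of_sameCycle (h : ¬ σ.SameCycle u v) (hab : σ.SameCycle a b) :
    (σ * swap u v).SameCycle a b :=
  sameCycle_of_mul_swap (sameCycle_mul_swap h) (by rwa [mul_assoc, swap_mul_self, mul_one])

theorem sameCycle_mul_swap_iff (h : σ.SameCycle u v) (ha : ¬ σ.SameCycle u a) :
    (σ * swap u v).SameCycle a b ↔ σ.SameCycle a b := by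
  refine ⟨sameCycle_of_mul_swap h, fun hab => sameCycle_induction (fun c hac => ?_) hab .rfl⟩
  have huc : ¬ σ.SameCycle u c := fun huc => ha (huc.trans (sameCycle_of_mul_swap h hac).symm)
  exact mul_swap_apply_of_not_sameCycle h huc ▸ hac.apply_right

end SameCycle

section NumOrbits

variable {α : Type*}

theorem numOrbits_eq_card_quotient (σ : Perm α) :
    numOrbits σ = Nat.card (Quotient (SameCycle.setoid σ)) := by
  have hclasses : {A | IsOrbit σ A} = (SameCycle.setoid σ).classes := by
    ext A
    exact exists_congr fun a => by simp only [sameCycle_comm (x := a)]; rfl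
  rw [numOrbits, hclasses, ← Nat.card_coe_set_eq]
  exact (Nat.card_congr (Setoid.quotientEquivClasses _)).symm

theorem numOrbits_one : numOrbits (1 : Perm α) = Nat.card α := by
  rw [numOrbits_eq_card_quotient]
  exact (Nat.card_congr (.ofBijective (Quotient.mk _)
    ⟨fun _ _ h => sameCycle_one.1 (Quotient.exact h), Quotient.mk_surjective⟩)).symm

variable [Finite α] [DecidableEq α]

theorem mul_swap_inv_induction {motive : Perm α → Prop} (σ : Perm α) (one : motive 1)
    (delete : ∀ σ x, σ x ≠ x → motive (σ * swap x (σ⁻¹ x)) → motive σ) : motive σ := by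
  have := Fintype.ofFinite α
  induction h : σ.support.card using Nat.strong_induction_on generalizing σ with
  | _ n ih =>
    by_cases hσ : σ = 1
    · exact hσ ▸ one
    obtain ⟨x, hx⟩ : ∃ x, σ x ≠ x := by simpa [Perm.ext_iff] using hσ
    have hlt : (σ * swap x (σ⁻¹ x)).support.card < n := by
      rw [swap_comm, mul_swap_eq_swap_mul]
      simpa [h] using card_support_swap_mul hx
    exact delete σ x hx (ih _ hlt _ rfl)

variable {σ : Perm α} {u v : α}

theorem numOrbits_mul_swap_add_one (h : ¬ σ.SameCycle u v) :
    numOrbits (σ * swap u v) + 1 = numOrbits σ := by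
  set σ' := σ * swap u v
  let mkσ : α → Quotient (SameCycle.setoid σ) := Quotient.mk _
  let f : Quotient (SameCycle.setoid σ) → Quotient (SameCycle.setoid σ') :=
    Quotient.map' id fun _ _ => sameCycle_mul_swap_of_sameCycle h
  have hf (a b) (hab : f (mkσ a) = f (mkσ b)) : mkσ a = mkσ b ∨ mkσ a = mkσ v ∨ mkσ b = mkσ v := by
    rcases sameCycle_or_of_mul_swap (Quotient.exact hab) with hab | ⟨-, hb⟩ | ⟨ha, -⟩
    exacts [.inl (Quotient.sound hab), .inr (.inr (Quotient.sound hb.symm)),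
      .inr (.inl (Quotient.sound ha.symm))]
  have huv : mkσ u ≠ mkσ v := fun huv => h (Quotient.exact huv)
  have hbij : Set.BijOn f {mkσ v}ᶜ Set.univ := by
    refine ⟨Set.mapsTo_univ _ _, ?_, ?_⟩
    · rintro ⟨a⟩ ha ⟨b⟩ hb hab
      exact (hf a b hab).resolve_right (not_or_intro ha hb)
    · rintro ⟨a⟩ -
      by_cases hav : mkσ a = mkσ v
      · refine ⟨mkσ u, huv, Quotient.sound ?_⟩
        exact (sameCycle_mul_swap h).trans
          (sameCycle_mul_swap_of_sameCycle h (Quotient.exact hav).symm)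
      · exact ⟨mkσ a, hav, rfl⟩
  rw [numOrbits_eq_card_quotient, numOrbits_eq_card_quotient, ← Set.ncard_univ, ← hbij.ncard_eq]
  rw [← Set.ncard_add_ncard_compl {mkσ v}, Set.ncard_singleton, add_comm]

theorem numOrbits_mul_swap_of_sameCycle (huv : u ≠ v) (h : σ.SameCycle u v) :
    numOrbits (σ * swap u v) = numOrbits σ + 1 := by
  rw [← numOrbits_mul_swap_add_one (not_sameCycle_mul_swap huv h), mul_assoc, swap_mul_self,
    mul_one]

theorem numOrbits_mul_swap_le : numOrbits (σ * swap u v) ≤ numOrbits σ + 1 := by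
  rcases eq_or_ne u v with rfl | huv
  · simp [← Perm.one_def]
  by_cases h : σ.SameCycle u v
  · exact (numOrbits_mul_swap_of_sameCycle huv h).le
  · have := numOrbits_mul_swap_add_one h
    omega

theorem numOrbits_mul_swap_inv {x : α} (hx : σ x ≠ x) :
    numOrbits (σ * swap x (σ⁻¹ x)) = numOrbits σ + 1 :=
  numOrbits_mul_swap_of_sameCycle (fun h => hx (eq_inv_iff_eq.1 h))
    (sameCycle_symm_apply_right.2 .rfl)

theorem numOrbits_swap_mul_add_one (h : ¬ σ.SameCycle u v) :
    numOrbits (swap u v * σ) + 1 = numOrbits σ := by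
  rw [swap_mul_eq_mul_swap]
  exact numOrbits_mul_swap_add_one (by simpa using h)

theorem numOrbits_le_swap_mul : numOrbits σ ≤ numOrbits (swap u v * σ) + 1 := by
  rw [swap_mul_eq_mul_swap]
  simpa [mul_assoc] using
    numOrbits_mul_swap_le (σ := σ * swap (σ⁻¹ u) (σ⁻¹ v)) (u := σ⁻¹ u) (v := σ⁻¹ v)

theorem numOrbits_inv_mul_cut {τ γ : Perm α} {x : α} (hx : τ x ≠ γ x) :
    numOrbits (τ⁻¹ * (γ * swap x (γ⁻¹ (τ x)))) = numOrbits (τ⁻¹ * γ) + 1 := by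
  rw [← mul_assoc, ← numOrbits_mul_swap_inv (x := x)]
  · simp
  · simpa [eq_symm_apply, eq_comm, symm_apply_eq] using hx

end NumOrbits

section Subadditivity

variable {α : Type*} [Finite α]

theorem numOrbits_add_le (σ ρ : Perm α) :
    numOrbits σ + numOrbits ρ ≤ Nat.card α + numOrbits (σ * ρ) := by
  classical
  induction ρ using mul_swap_inv_induction with
  | one => rw [numOrbits_one, mul_one, add_comm]
  | delete ρ x hx ih =>
    rw [numOrbits_mul_swap_inv hx, ← mul_assoc] at ih
    have := numOrbits_mul_swap_le (σ := σ * ρ) (u := x) (v := ρ⁻¹ x)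
    omega

theorem numOrbits_add_add_two_le {τ γ : Perm α} {x : α} (hx : ¬ γ.SameCycle x (τ x)) :
    numOrbits τ + numOrbits (τ⁻¹ * γ) + 2 ≤ Nat.card α + numOrbits γ := by
  classical
  have hcut := numOrbits_inv_mul_cut (τ := τ) (γ := γ) (x := x) fun h => hx ⟨1, h.symm⟩
  have hmerge := numOrbits_mul_swap_add_one (σ := γ) (u := x) (v := γ⁻¹ (τ x)) (by simpa using hx)
  have hle := numOrbits_add_le τ (τ⁻¹ * (γ * swap x (γ⁻¹ (τ x))))
  rw [mul_inv_cancel_left] at hle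
  omega

end Subadditivity

section CyclicOrder

variable {α : Type*} {pos : α → ℕ} {S D : Set α} {a b c d : α} {f : α → α}

/-- The points `a`, `b`, `c` occur in this cyclic order, where the points of `α` are placed
around a circle according to their position numbers `pos`. -/
def Cyc (pos : α → ℕ) (a b c : α) : Prop :=
  pos a < pos b ∧ pos b < pos c ∨ pos b < pos c ∧ pos c < pos a ∨ pos c < pos a ∧ pos a < pos b

/-- `b` is the point of `S` met first when going around the circle from `a`; possibly `b = a`,
which forces `S = {a}`. -/
def IsNext (pos : α → ℕ) (S : Set α) (a b : α) : Prop :=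
  b ∈ S ∧ ∀ u ∈ S, u = a ∨ u = b ∨ Cyc pos a b u

/-- `f` rotates `D`: it moves every point of `D` to the next point of `D` around the circle. -/
def RotOn (pos : α → ℕ) (D : Set α) (f : α → α) : Prop :=
  ∀ a ∈ D, IsNext pos D a (f a)

theorem Cyc.rotate (h : Cyc pos a b c) : Cyc pos b c a := by
  unfold Cyc at *; omega

theorem Cyc.trans (h₁ : Cyc pos a b d) (h₂ : Cyc pos b c d) : Cyc pos a c d := by
  unfold Cyc at *; omega

theorem Cyc.not_swap (h : Cyc pos a b c) : ¬ Cyc pos a c b := by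
  unfold Cyc at *; omega

theorem not_cyc_self : ¬ Cyc pos a a b := by
  unfold Cyc; omega

theorem Cyc.ne (h : Cyc pos a b c) : a ≠ b ∧ b ≠ c ∧ c ≠ a :=
  ⟨fun e => not_cyc_self (e ▸ h), fun e => not_cyc_self (e ▸ h).rotate,
    fun e => not_cyc_self (e ▸ h).rotate.rotate⟩

theorem IsNext.eq (hb : IsNext pos S a b) (hc : IsNext pos S a c) : b = c := by
  rcases hb.2 c hc.1 with rfl | rfl | h
  · exact (hc.2 b hb.1).elim id fun h => h.resolve_right not_cyc_self
  · rfl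
  · rcases hc.2 b hb.1 with rfl | rfl | h'
    exacts [(not_cyc_self h).elim, rfl, (h.not_swap h').elim]

theorem RotOn.mapsTo (hf : RotOn pos D f) : Set.MapsTo f D D :=
  fun a ha => (hf a ha).1

theorem RotOn.congr {g : α → α} (hf : RotOn pos D f) (hfg : Set.EqOn f g D) : RotOn pos D g :=
  fun a ha => hfg ha ▸ hf a ha

theorem RotOn.eq_of_cross {t : ℕ} (hf : RotOn pos D f) (ha : a ∈ D) (hb : b ∈ D)
    (h : (t ≤ pos a ∧ t ≤ pos b) ∧ pos (f a) < t ∧ pos (f b) < t ∨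
      (pos a < t ∧ pos b < t) ∧ t ≤ pos (f a) ∧ t ≤ pos (f b)) : a = b := by
  have hab := (hf a ha).2 b hb
  have hba := (hf b hb).2 a ha
  rcases hab with rfl | rfl | hab
  · rfl
  · omega
  rcases hba with rfl | rfl | hba
  · rfl
  · omega
  unfold Cyc at *
  omega

theorem rotOn_of_succ_or_wrap (hpos : pos.Injective) (hmaps : Set.MapsTo f D D)
    (hf : ∀ a ∈ D, pos (f a) = pos a + 1 ∨ ∀ u ∈ D, pos (f a) ≤ pos u ∧ pos u ≤ pos a) :
    RotOn pos D f := by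
  refine fun a ha => ⟨hmaps ha, fun u hu => ?_⟩
  rw [← hpos.eq_iff, ← hpos.eq_iff (b := f a), Cyc]
  have := (hf a ha).imp_right fun h => h u hu
  omega

end CyclicOrder

section Induced

variable {α : Type*} {f : α → α} {S : Set α} {a b : α}

theorem induced_of_mem (h : f a ∈ S) : induced f S a = f a := by
  classical
  have hex : ∃ k, 0 < k ∧ f^[k] a ∈ S := ⟨1, one_pos, h⟩
  have hfind : Nat.find hex = 1 := (Nat.find_eq_iff hex).2 ⟨⟨one_pos, h⟩, by omega⟩
  rw [induced, dif_pos hex, hfind, Function.iterate_one]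

variable [Finite α] {σ : Perm α}

theorem exists_iterate_eq_induced (σ : Perm α) (ha : a ∈ S) :
    ∃ k, 0 < k ∧ (σ ^ k) a = induced σ S a ∧ induced σ S a ∈ S ∧
      ∀ i, 0 < i → i < k → (σ ^ i) a ∉ S := by
  classical
  have hex : ∃ k, 0 < k ∧ σ^[k] a ∈ S :=
    ⟨orderOf σ, orderOf_pos σ, by simpa [iterate_eq_pow, pow_orderOf_eq_one] using ha⟩
  obtain ⟨hk, hmem⟩ := Nat.find_spec hex
  have hinduced : induced σ S a = σ^[Nat.find hex] a := by rw [induced, dif_pos hex]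
  refine ⟨Nat.find hex, hk, ?_, hinduced ▸ hmem, fun i hi hik h => Nat.find_min hex hik ⟨hi, ?_⟩⟩
  · rw [hinduced, iterate_eq_pow]
  · rwa [iterate_eq_pow]

theorem induced_mem (ha : a ∈ S) : induced σ S a ∈ S :=
  let ⟨_, _, _, h, _⟩ := exists_iterate_eq_induced σ ha
  h

theorem sameCycle_induced (ha : a ∈ S) : σ.SameCycle a (induced σ S a) :=
  let ⟨k, _, h, _⟩ := exists_iterate_eq_induced σ ha
  ⟨k, h⟩

theorem exists_induced_eq_apply (ha : a ∈ S) (hσa : σ a ∉ S) :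
    ∃ b, σ.SameCycle a b ∧ b ∉ S ∧ σ b ∈ S ∧ induced σ S a = σ b := by
  obtain ⟨k, hk, hka, hmem, hlt⟩ := exists_iterate_eq_induced σ ha
  have hk1 : k ≠ 1 := by
    rintro rfl
    rw [← hka, pow_one] at hmem
    exact hσa hmem
  have hb : σ ((σ ^ (k - 1)) a) = induced σ S a := by
    rw [← mul_apply, ← pow_succ', Nat.sub_add_cancel hk, hka]
  exact ⟨(σ ^ (k - 1)) a, ⟨(k - 1 : ℕ), rfl⟩, hlt _ (by omega) (by omega), hb ▸ hmem, hb.symm⟩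

theorem mem_of_sameCycle_of_mapsTo_induced {T : Set α} (hTS : T ⊆ S)
    (hT : Set.MapsTo (induced σ S) T T) (ha : a ∈ T) (hb : b ∈ S) (hab : σ.SameCycle a b) :
    b ∈ T := by
  obtain ⟨m, rfl⟩ := hab.exists_nat_pow_eq
  clear hab
  induction m using Nat.strong_induction_on generalizing a with
  | _ m ih =>
    rcases m.eq_zero_or_pos with rfl | hm
    · exact ha
    obtain ⟨k, hk, hka, -, hlt⟩ := exists_iterate_eq_induced σ (hTS ha)
    have hkm : k ≤ m := not_lt.1 fun h => hlt m hm h hb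
    have hsplit : (σ ^ m) a = (σ ^ (m - k)) (induced σ S a) := by
      rw [← hka, ← mul_apply, ← pow_add, Nat.sub_add_cancel hkm]
    rw [hsplit] at hb ⊢
    exact ih (m - k) (by omega) (hT ha) hb

variable {pos : α → ℕ} {D : Set α}

theorem RotOn.isNext_induced_inter (hσ : RotOn pos D σ) (ha : a ∈ S) (haD : a ∈ D) :
    IsNext pos (S ∩ D) a (induced σ S a) := by
  obtain ⟨k, hk, hka, hmem, hlt⟩ := exists_iterate_eq_induced σ ha
  have hD (i : ℕ) : (σ ^ i) a ∈ D := by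
    induction i with
    | zero => exact haD
    | succ i ih => rw [pow_succ', mul_apply]; exact hσ.mapsTo ih
  have hnext (i : ℕ) (hi : i + 1 ≤ k) (u) (hu : u ∈ S ∩ D) :
      u = a ∨ u = (σ ^ (i + 1)) a ∨ Cyc pos a ((σ ^ (i + 1)) a) u := by
    induction i with
    | zero => simpa using (hσ a haD).2 u hu.2
    | succ i ih =>
      have hstep := (hσ _ (hD (i + 1))).2 u hu.2
      rw [← mul_apply, ← pow_succ'] at hstep
      have hne : u ≠ (σ ^ (i + 1)) a := fun h => hlt (i + 1) (by omega) hi (h ▸ hu.1)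
      rcases ih (by omega) with h | h | h
      · exact .inl h
      · exact (hne h).elim
      · exact .inr ((hstep.resolve_left hne).imp_right h.trans)
  refine ⟨⟨hmem, hka ▸ hD k⟩, ?_⟩
  rw [← hka, ← Nat.sub_add_cancel hk]
  exact hnext (k - 1) (by omega)

theorem RotOn.isNext_induced (hσ : RotOn pos D σ) (hSD : S ⊆ D) (ha : a ∈ S) :
    IsNext pos S a (induced σ S a) := by
  simpa only [Set.inter_eq_left.2 hSD] using hσ.isNext_induced_inter ha (hSD ha)

theorem RotOn.induced_eq {σ' : Perm α} {D' : Set α} (hσ : RotOn pos D σ) (hσ' : RotOn pos D' σ')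
    (hSD : S ⊆ D) (hSD' : S ⊆ D') (ha : a ∈ S) : induced σ S a = induced σ' S a :=
  (hσ.isNext_induced hSD ha).eq (hσ'.isNext_induced hSD' ha)

theorem RotOn.sameCycle (hσ : RotOn pos D σ) (ha : a ∈ D) (hb : b ∈ D) : σ.SameCycle a b := by
  have hsub : {a, b} ⊆ D := Set.insert_subset ha (Set.singleton_subset_iff.2 hb)
  obtain ⟨h, hnext⟩ := hσ.isNext_induced hsub (Set.mem_insert a {b})
  have hind : induced σ {a, b} a = b := by
    rcases h with h | h
    · rw [h] at hnext ⊢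
      exact (((hnext b (by simp)).imp_right fun h => h.resolve_right not_cyc_self).elim id id).symm
    · exact h
  exact hind ▸ sameCycle_induced (Set.mem_insert a {b})

end Induced

section Patterns

variable {α : Type*} [Finite α] {σ : Perm α} {pos : α → ℕ} {S D : Set α} {a b c d x y u : α}

theorem mapsCyc3_iff_cyc (hσ : RotOn pos D σ) (hD : {a, b, c} ⊆ D) (hca : c ≠ a) (hcb : c ≠ b) :
    MapsCyc3 σ {a, b, c} a b c ↔ Cyc pos a b c := by
  constructor
  · rintro ⟨hab, -, -⟩
    have h := (hσ.isNext_induced hD (a := a) (by simp)).2 c (by simp)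
    exact (hab ▸ h).resolve_left hca |>.resolve_left hcb
  · intro h
    refine ⟨?_, ?_, ?_⟩ <;> refine (hσ.isNext_induced hD (by simp)).eq ⟨by simp, ?_⟩ <;>
      rintro u (rfl | rfl | rfl)
    exacts [.inl rfl, .inr (.inl rfl), .inr (.inr h), .inr (.inr h.rotate), .inl rfl,
      .inr (.inl rfl), .inr (.inl rfl), .inr (.inr h.rotate.rotate), .inl rfl]

theorem mapsCyc4_iff_cyc (hσ : RotOn pos D σ) (hD : {a, b, c, d} ⊆ D) (hca : c ≠ a) (hcb : c ≠ b)
    (had : a ≠ d) : MapsCyc4 σ {a, b, c, d} a b c d ↔ Cyc pos a b c ∧ Cyc pos c d a := by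
  constructor
  · rintro ⟨hab, -, hcd, -⟩
    have hac := (hσ.isNext_induced hD (a := a) (by simp)).2 c (by simp)
    have hca' := (hσ.isNext_induced hD (a := c) (by simp)).2 a (by simp)
    exact ⟨(hab ▸ hac).resolve_left hca |>.resolve_left hcb,
      (hcd ▸ hca').resolve_left hca.symm |>.resolve_left had⟩
  · rintro ⟨h₁, h₂⟩
    refine ⟨?_, ?_, ?_, ?_⟩ <;> refine (hσ.isNext_induced hD (by simp)).eq ⟨by simp, ?_⟩ <;>
      rintro u (rfl | rfl | rfl | rfl) <;>
      first
        | exact .inl rfl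
        | exact .inr (.inl rfl)
        | refine .inr (.inr ?_)
          unfold Cyc at *
          omega

theorem eq_or_eq_of_induced_eq (hx : x ∈ S) (hy : y ∈ S) (hxy : induced σ S x = y)
    (hyx : induced σ S y = x ∨ induced σ S y = y) (hu : u ∈ S) (hxu : σ.SameCycle x u) :
    u = x ∨ u = y :=
  mem_of_sameCycle_of_mapsTo_induced (T := {x, y}) (Set.pair_subset hx hy)
    (by rintro _ (rfl | rfl); exacts [.inr hxy, hyx]) (Set.mem_insert x _) hu hxu

theorem MapsSwap.eq_or_eq (h : MapsSwap σ S x y) (hx : x ∈ S) (hy : y ∈ S) (hu : u ∈ S)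
    (hxu : σ.SameCycle x u) : u = x ∨ u = y :=
  eq_or_eq_of_induced_eq hx hy h.1 (.inl h.2) hu hxu

theorem induced_ne_self (ha : a ∈ S) (hb : b ∈ S) (hab : a ≠ b) (h : σ.SameCycle a b) :
    induced σ S a ≠ a := fun hfix =>
  hab (or_self_iff.1 (eq_or_eq_of_induced_eq ha ha hfix (.inl hfix) hb h)).symm

theorem mapsSwap_of_sameCycle (hx : x ∈ S) (hy : y ∈ S) (hxy : x ≠ y) (h : σ.SameCycle x y)
    (honly : ∀ u ∈ S, σ.SameCycle x u → u = x ∨ u = y) : MapsSwap σ S x y :=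
  ⟨(honly _ (induced_mem hx) (sameCycle_induced hx)).resolve_left (induced_ne_self hx hy hxy h),
    (honly _ (induced_mem hy) (h.trans (sameCycle_induced hy))).resolve_right
      (induced_ne_self hy hx hxy.symm h.symm)⟩

theorem mapsCyc3_of_sameCycle (ha : a ∈ S) (hb : b ∈ S) (hc : c ∈ S) (hca : c ≠ a) (hcb : c ≠ b)
    (hab : σ a = b) (hac : σ.SameCycle a c)
    (honly : ∀ u ∈ S, σ.SameCycle a u → u = a ∨ u = b ∨ u = c) : MapsCyc3 σ S a b c := by
  have hinda : induced σ S a = b := hab ▸ induced_of_mem (hab ▸ hb)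
  have hind (t) (ht : t ∈ S) (hat : σ.SameCycle a t) : induced σ S t = a ∨ induced σ S t = b ∨
      induced σ S t = c := honly _ (induced_mem ht) (hat.trans (sameCycle_induced ht))
  have hSCb : σ.SameCycle a b := ⟨1, hab⟩
  have hindb : induced σ S b = c := by
    by_contra hne
    have hbab := (or_assoc.2 (hind b hb hSCb)).resolve_right hne
    exact (eq_or_eq_of_induced_eq ha hb hinda hbab hc hac).elim hca hcb
  refine ⟨hinda, hindb, ?_⟩
  by_contra hne
  have hcbc := (hind c hc hac).resolve_left hne
  rcases eq_or_eq_of_induced_eq hb hc hindb hcbc ha hSCb.symm with hba | hac'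
  · exact induced_ne_self ha hc hca.symm hac (hinda.trans hba.symm)
  · exact hca hac'.symm

theorem mapsSwap2_of_sameCycle (hS : {a, b, c, d} ⊆ S) (hca : c ≠ a) (hdb : d ≠ b)
    (hac : σ.SameCycle a c) (hbd : σ.SameCycle b d) (hab : ¬ σ.SameCycle a b)
    (honly : ∀ u ∈ S, σ.SameCycle a u ∨ σ.SameCycle b u → u ∈ ({a, b, c, d} : Set α)) :
    MapsSwap2 σ S a b c d := by
  have hba : ¬ σ.SameCycle b a := fun h => hab h.symm
  have had : ¬ σ.SameCycle a d := fun h => hab (h.trans hbd.symm)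
  have hbc : ¬ σ.SameCycle b c := fun h => hba (h.trans hac.symm)
  have hswap_ac : MapsSwap σ S a c :=
    mapsSwap_of_sameCycle (hS (by simp)) (hS (by simp)) hca.symm hac fun u hu hau => by
      rcases honly u hu (.inl hau) with rfl | rfl | rfl | rfl
      exacts [.inl rfl, (hab hau).elim, .inr rfl, (had hau).elim]
  have hswap_bd : MapsSwap σ S b d :=
    mapsSwap_of_sameCycle (hS (by simp)) (hS (by simp)) hdb.symm hbd fun u hu hbu => by
      rcases honly u hu (.inr hbu) with rfl | rfl | rfl | rfl
      exacts [(hba hbu).elim, .inl rfl, (hbc hbu).elim, .inr rfl]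
  exact ⟨hswap_ac.1, hswap_ac.2, hswap_bd.1, hswap_bd.2⟩

end Patterns

section Noncrossing

variable {α : Type*} [Finite α] {pos : α → ℕ} {τ : Perm α} {a b c d u v w z : α}

/-- `τ` is noncrossing with respect to the circular arrangement `pos`: the open arc from `z` to
`τ z` is `τ`-invariant for every `z`. This single condition captures both that the orbits do not
cross and that `τ` goes once around the circle along each orbit. -/
def IsNoncrossing (pos : α → ℕ) (τ : Perm α) : Prop :=
  ∀ z w, Cyc pos z w (τ z) → Cyc pos z (τ w) (τ z)

theorem IsNoncrossing.cyc_of_sameCycle (hτ : IsNoncrossing pos τ) (hw : Cyc pos z w (τ z))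
    (h : τ.SameCycle w v) : Cyc pos z v (τ z) :=
  sameCycle_induction (P := fun v => Cyc pos z v (τ z)) (hτ z) h hw

theorem IsNoncrossing.not_cyc (hτ : IsNoncrossing pos τ) (h : τ.SameCycle z w) :
    ¬ Cyc pos z w (τ z) := fun hw =>
  not_cyc_self (hτ.cyc_of_sameCycle hw h.symm)

theorem IsNoncrossing.rotOn (hpos : pos.Injective) (hτ : IsNoncrossing pos τ) (a : α) :
    RotOn pos {b | τ.SameCycle a b} τ := by
  refine fun z hz => ⟨hz.apply_right, fun u hu => ?_⟩
  have hzu : τ.SameCycle z u := hz.symm.trans hu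
  have hnot := hτ.not_cyc hzu
  have hfix : τ z = z → u = z := fun h => (hzu.eq_of_left h).symm
  rw [← hpos.eq_iff, ← hpos.eq_iff (a := u)] at hfix
  rw [← hpos.eq_iff, ← hpos.eq_iff (b := τ z)]
  unfold Cyc at *
  omega

theorem IsNoncrossing.not_cross (hpos : pos.Injective) (hτ : IsNoncrossing pos τ)
    (hac : τ.SameCycle a c) (hbd : τ.SameCycle b d) (hab : ¬ τ.SameCycle a b) :
    ¬ (Cyc pos a b c ∧ Cyc pos c d a) := by
  rintro ⟨habc, hcda⟩
  have hne (e f) (he : τ.SameCycle a e) (hf : τ.SameCycle b f) : pos e ≠ pos f :=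
    hpos.ne fun hef => hab (he.trans (hef ▸ hf.symm))
  obtain ⟨z, haz, hz, hτz⟩ : ∃ z, τ.SameCycle a z ∧ Cyc pos d z b ∧ ¬ Cyc pos d (τ z) b := by
    by_contra! hall
    have hdab : Cyc pos d a b := by unfold Cyc at *; omega
    have hstep (z) (hz : τ.SameCycle a z ∧ Cyc pos d z b) :
        τ.SameCycle a (τ z) ∧ Cyc pos d (τ z) b := ⟨hz.1.apply_right, hall z hz.1 hz.2⟩
    have hdcb := (sameCycle_induction hstep hac ⟨.rfl, hdab⟩).2
    unfold Cyc at *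
    omega
  have hτzb := hne (τ z) b haz.apply_right .rfl
  have hzb : Cyc pos z b (τ z) := by unfold Cyc at *; omega
  have hzd := hτ.cyc_of_sameCycle hzb hbd
  unfold Cyc at *
  omega

variable [DecidableEq α]

theorem IsNoncrossing.mul_swap_inv (hpos : pos.Injective) (hτ : IsNoncrossing pos τ) (z : α) :
    IsNoncrossing pos (τ * swap z (τ⁻¹ z)) := by
  set τ' := τ * swap z (τ⁻¹ z) with hτ'
  have hsame (w) : τ.SameCycle w (τ' w) :=
    sameCycle_of_mul_swap (sameCycle_symm_apply_right.2 .rfl) SameCycle.rfl.apply_right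
  have hfix : τ' z = z := by simp [hτ']
  intro u w hw
  by_cases huz : u = z
  · rw [huz, hfix] at hw
    unfold Cyc at hw
    omega
  by_cases hτu : τ u = z
  · subst hτu
    have hu : τ' u = τ (τ u) := by simp [hτ']
    rw [hu] at hw ⊢
    rcases eq_or_ne w (τ u) with rfl | hwz
    · rwa [hfix]
    have hb (h : Cyc pos u w (τ u)) := hτ.cyc_of_sameCycle h (hsame w)
    have ha (h : Cyc pos (τ u) w (τ (τ u))) := hτ.cyc_of_sameCycle h (hsame w)
    rw [← hpos.ne_iff] at hwz
    unfold Cyc at *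
    omega
  · have hu : τ' u = τ u := by
      rw [hτ', mul_apply, swap_apply_of_ne_of_ne huz (fun h => hτu (by simp [h]))]
    rw [hu] at hw ⊢
    exact hτ.cyc_of_sameCycle hw (hsame w)

end Noncrossing

section Genus

variable {α : Type*} {pos : α → ℕ} {τ γ : Perm α}

theorem numOrbits_eq_one [Nonempty α] (h : ∀ a b, γ.SameCycle a b) : numOrbits γ = 1 := by
  have : Subsingleton (Quotient (SameCycle.setoid γ)) :=
    ⟨by rintro ⟨a⟩ ⟨b⟩; exact Quotient.sound (h a b)⟩
  have : Nonempty (Quotient (SameCycle.setoid γ)) := ‹Nonempty α›.map (Quotient.mk _)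
  rw [numOrbits_eq_card_quotient, Nat.card_unique]

theorem RotOn.cyc_apply (hγ : RotOn pos Set.univ γ) {z a b : α} (h : Cyc pos z a b) :
    γ a = b ∨ Cyc pos z (γ a) b := by
  rcases (hγ a trivial).2 b trivial with rfl | hb | hb
  exacts [(not_cyc_self h.rotate).elim, .inl hb.symm, .inr (h.trans hb)]

theorem RotOn.cyc_cut_apply [DecidableEq α] (hγ : RotOn pos Set.univ γ) {z a b : α}
    (h : Cyc pos z a b) : Cyc pos z ((γ * swap z (γ⁻¹ b)) a) b := by
  have haz : a ≠ z := by rintro rfl; exact not_cyc_self h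
  by_cases hab : γ a = b
  · rw [← hab, Perm.inv_def, symm_apply_apply, mul_apply, swap_apply_right, hab]
    have hbz : b ≠ z := by rintro rfl; exact not_cyc_self h.rotate.rotate
    refine ((hγ z trivial).2 b trivial).resolve_left hbz |>.resolve_left fun hzb => ?_
    exact haz (γ.injective (hab.trans hzb))
  · have haγ : a ≠ γ⁻¹ b := fun ha => hab (by simp [ha])
    rw [mul_apply, swap_apply_of_ne_of_ne haz haγ]
    exact (hγ.cyc_apply h).resolve_left hab

variable [Finite α]

theorem RotOn.numOrbits_eq_one [Nonempty α] (hγ : RotOn pos Set.univ γ) : numOrbits γ = 1 :=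
  _root_.numOrbits_eq_one fun _ _ => hγ.sameCycle trivial trivial

-- Cutting `γ` along `z ↦ τ z` splits off the arc from `z` to `τ z`; an arrow of `τ` leaving that
-- arc would join two cycles of the cut rotation, which costs two orbits.
theorem isNoncrossing_of_numOrbits_eq (hγ : RotOn pos Set.univ γ)
    (h : numOrbits τ + numOrbits (τ⁻¹ * γ) = Nat.card α + 1) : IsNoncrossing pos τ := by
  classical
  intro z w hw
  have : Nonempty α := ⟨z⟩
  have hτz : τ z ≠ γ z := fun hz => by
    rcases (hγ z trivial).2 w trivial with rfl | rfl | hzw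
    exacts [not_cyc_self hw, not_cyc_self (hz ▸ hw).rotate, hw.not_swap (hz ▸ hzw)]
  have hsplit : numOrbits (γ * swap z (γ⁻¹ (τ z))) = 2 := by
    rw [numOrbits_mul_swap_of_sameCycle _ (hγ.sameCycle trivial trivial), hγ.numOrbits_eq_one]
    exact fun hz => hτz (eq_inv_iff_eq.1 hz).symm
  by_contra hτw
  have hleave : ¬ (γ * swap z (γ⁻¹ (τ z))).SameCycle w (τ w) := fun h =>
    hτw (sameCycle_induction (P := fun a => Cyc pos z a (τ z)) (fun _ => hγ.cyc_cut_apply) h hw)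
  have hcut := numOrbits_inv_mul_cut hτz
  have hle := numOrbits_add_add_two_le hleave
  omega

theorem IsNoncrossing.not_sameCycle_inv_mul (hγ : RotOn pos Set.univ γ) (hτ : IsNoncrossing pos τ)
    {z : α} (hz : τ z ≠ z) : ¬ (τ⁻¹ * γ).SameCycle z (τ⁻¹ z) := by
  have hstep (a) (ha : a = z ∨ Cyc pos z a (τ z)) :
      (τ⁻¹ * γ) a = z ∨ Cyc pos z ((τ⁻¹ * γ) a) (τ z) := by
    have hγa : γ a = τ z ∨ Cyc pos z (γ a) (τ z) := by
      rcases ha with rfl | ha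
      · exact ((hγ a trivial).2 (τ a) trivial).resolve_left hz |>.imp_left Eq.symm
      · exact hγ.cyc_apply ha
    exact hγa.imp (fun h => by simp [h])
      fun h => hτ.cyc_of_sameCycle h (sameCycle_symm_apply_right.2 .rfl)
  intro h
  rcases sameCycle_induction hstep h (.inl rfl) with heq | hcyc
  · exact hz (inv_eq_iff_eq.1 heq).symm
  · exact hτ.not_cyc (sameCycle_symm_apply_right.2 .rfl) hcyc

theorem IsNoncrossing.numOrbits_eq [Nonempty α] (hpos : pos.Injective)
    (hγ : RotOn pos Set.univ γ) (hτ : IsNoncrossing pos τ) :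
    numOrbits τ + numOrbits (τ⁻¹ * γ) = Nat.card α + 1 := by
  classical
  induction τ using mul_swap_inv_induction with
  | one => rw [numOrbits_one, inv_one, one_mul, hγ.numOrbits_eq_one]
  | delete τ z hz ih =>
    have ih := ih (hτ.mul_swap_inv hpos z)
    have hmerge := numOrbits_swap_mul_add_one (hτ.not_sameCycle_inv_mul hγ hz)
    rw [numOrbits_mul_swap_inv hz, mul_inv_rev, swap_inv, mul_assoc] at ih
    omega

theorem numOrbits_eq_iff_isNoncrossing [Nonempty α] (hpos : pos.Injective)
    (hγ : RotOn pos Set.univ γ) :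
    numOrbits τ + numOrbits (τ⁻¹ * γ) = Nat.card α + 1 ↔ IsNoncrossing pos τ :=
  ⟨isNoncrossing_of_numOrbits_eq hγ, fun hτ => hτ.numOrbits_eq hpos hγ⟩

end Genus

section FormPerm

variable {α : Type*} {pos : α → ℕ} {l : List α} {s n : ℕ} {u : α}

theorem mem_iff_of_map_eq_range' (hpos : pos.Injective) (hl : l.map pos = List.range' s n) :
    u ∈ l ↔ s ≤ pos u ∧ pos u < s + n := by
  rw [← List.mem_map_of_injective hpos, hl, List.mem_range'_1]

variable [DecidableEq α]

theorem formPerm_succ_or_wrap (hl : l.map pos = List.range' s n) (hu : u ∈ l) :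
    pos (l.formPerm u) = pos u + 1 ∨ pos u + 1 = s + n ∧ pos (l.formPerm u) = s := by
  have hnodup : l.Nodup := .of_map pos (hl ▸ List.nodup_range')
  have hlen : l.length = n := by simpa using congrArg List.length hl
  have hget (i : ℕ) (hi : i < l.length) : pos l[i] = s + i := by
    rw [← List.getElem_map pos (h := by simpa using hi)]
    simp only [hl, List.getElem_range', one_mul]
  obtain ⟨i, hi, rfl⟩ := List.getElem_of_mem hu
  rw [List.formPerm_apply_getElem _ hnodup, hget, hget]
  rcases eq_or_lt_of_le (Nat.succ_le_of_lt hi) with hlast | hlt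
  · exact .inr ⟨by omega, by simp [← Nat.succ_eq_add_one, hlast]⟩
  · exact .inl (by rw [Nat.mod_eq_of_lt hlt]; rfl)

theorem rotOn_formPerm (hpos : pos.Injective) (hl : l.map pos = List.range' s n) :
    RotOn pos {u | u ∈ l} l.formPerm := by
  refine rotOn_of_succ_or_wrap hpos (fun _ => List.formPerm_apply_mem_of_mem) fun u hu =>
    (formPerm_succ_or_wrap hl hu).imp_right fun hwrap v hv => ?_
  have := (mem_iff_of_map_eq_range' hpos hl).1 hv
  omega

end FormPerm

section Annulus

variable {p q : ℕ} {u v x y : Fin (p + q)}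

theorem map_val_take_finRange (p q : ℕ) :
    ((List.finRange (p + q)).take p).map Fin.val = List.range' 0 p := by
  rw [List.map_take, List.map_coe_finRange_eq_range, List.take_range, List.range_eq_range']
  simp

theorem map_val_drop_finRange (p q : ℕ) :
    ((List.finRange (p + q)).drop p).map Fin.val = List.range' p q := by
  rw [List.map_drop, List.map_coe_finRange_eq_range, List.range_eq_range', List.drop_range']
  simp

theorem mem_take_finRange : u ∈ (List.finRange (p + q)).take p ↔ u ∈ extSet p q := by
  rw [mem_iff_of_map_eq_range' Fin.val_injective (map_val_take_finRange p q)]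
  simp [extSet]

theorem mem_drop_finRange : u ∈ (List.finRange (p + q)).drop p ↔ u ∈ intSet p q := by
  rw [mem_iff_of_map_eq_range' Fin.val_injective (map_val_drop_finRange p q)]
  simp [intSet]

theorem notMem_extSet : u ∉ extSet p q ↔ u ∈ intSet p q := by
  simp [extSet, intSet]

theorem notMem_intSet : u ∉ intSet p q ↔ u ∈ extSet p q := by
  simp [extSet, intSet]

theorem mem_extSet_or_mem_intSet (u : Fin (p + q)) : u ∈ extSet p q ∨ u ∈ intSet p q :=
  lt_or_ge (u : ℕ) p

theorem val_gammaExt (hu : u ∈ extSet p q) : (gammaExt p q u : ℕ) = u + 1 ∨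
    (u : ℕ) + 1 = p ∧ (gammaExt p q u : ℕ) = 0 := by
  have h := formPerm_succ_or_wrap (map_val_take_finRange p q) (mem_take_finRange.2 hu)
  rwa [zero_add] at h

theorem val_gammaInt (hu : u ∈ intSet p q) : (gammaInt p q u : ℕ) = u + 1 ∨
    (u : ℕ) + 1 = p + q ∧ (gammaInt p q u : ℕ) = p :=
  formPerm_succ_or_wrap (map_val_drop_finRange p q) (mem_drop_finRange.2 hu)

theorem gammaExt_mem (hu : u ∈ extSet p q) : gammaExt p q u ∈ extSet p q :=
  mem_take_finRange.1 (List.formPerm_apply_mem_of_mem (mem_take_finRange.2 hu))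

theorem gammaInt_mem (hu : u ∈ intSet p q) : gammaInt p q u ∈ intSet p q :=
  mem_drop_finRange.1 (List.formPerm_apply_mem_of_mem (mem_drop_finRange.2 hu))

theorem gammaAnn_apply_of_mem_extSet (hu : u ∈ extSet p q) : gammaAnn p q u = gammaExt p q u := by
  have : u ∉ (List.finRange (p + q)).drop p :=
    mem_drop_finRange.not.2 (notMem_intSet.2 hu)
  rw [gammaAnn, mul_apply, gammaInt, List.formPerm_apply_of_notMem this]

theorem gammaAnn_apply_of_mem_intSet (hu : u ∈ intSet p q) : gammaAnn p q u = gammaInt p q u := by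
  have : gammaInt p q u ∉ (List.finRange (p + q)).take p :=
    mem_take_finRange.not.2 (notMem_extSet.2 (gammaInt_mem hu))
  rw [gammaAnn, mul_apply]
  exact List.formPerm_apply_of_notMem this

/-- The circle obtained from the annulus by cutting along an arrow `x → y`, where `x` is external
and `y` internal: `cutPos p q x y u` is the position of `u` in the list
`y, γ y, …, γ⁻¹ y, γ x, γ² x, …, x`. -/
def cutPos (p q : ℕ) (x y u : Fin (p + q)) : ℕ :=
  if (u : ℕ) < p then
    if (u : ℕ) ≤ x then q + p + u - x - 1 else q + u - x - 1
  else
    if (y : ℕ) ≤ u then u - y else u + q - y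

theorem cutPos_lt_iff (hx : x ∈ extSet p q) (hy : y ∈ intSet p q) :
    cutPos p q x y u < q ↔ u ∈ intSet p q := by
  simp only [extSet, intSet, Set.mem_ofPred_eq] at *
  unfold cutPos
  split_ifs <;> omega

theorem cutPos_lt : cutPos p q x y u < p + q := by
  unfold cutPos
  split_ifs <;> omega

theorem cutPos_left (hx : x ∈ extSet p q) : cutPos p q x y x = p + q - 1 := by
  simp only [extSet, Set.mem_ofPred_eq] at *
  unfold cutPos
  split_ifs <;> omega

theorem cutPos_le_left (hx : x ∈ extSet p q) (u : Fin (p + q)) :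
    cutPos p q x y u ≤ cutPos p q x y x :=
  cutPos_left (y := y) hx ▸ Nat.le_sub_one_of_lt cutPos_lt

theorem cutPos_right (hy : y ∈ intSet p q) : cutPos p q x y y = 0 := by
  simp only [intSet, Set.mem_ofPred_eq] at *
  unfold cutPos
  split_ifs <;> omega

theorem cutPos_injective (hx : x ∈ extSet p q) (hy : y ∈ intSet p q) :
    (cutPos p q x y).Injective := by
  intro u v huv
  simp only [extSet, intSet, Set.mem_ofPred_eq] at hx hy
  unfold cutPos at huv
  apply Fin.ext
  split_ifs at huv <;> omega

theorem cutPos_gammaExt (hx : x ∈ extSet p q) (hu : u ∈ extSet p q) :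
    u ≠ x ∧ cutPos p q x y (gammaExt p q u) = cutPos p q x y u + 1 ∨
      u = x ∧ cutPos p q x y (gammaExt p q u) = q := by
  have hval := val_gammaExt hu
  have hmem := gammaExt_mem hu
  simp only [extSet, Set.mem_ofPred_eq] at hx hu hmem
  rw [ne_eq, Fin.ext_iff]
  unfold cutPos
  split_ifs <;> omega

theorem cutPos_gammaInt (hy : y ∈ intSet p q) (hu : u ∈ intSet p q) :
    cutPos p q x y (gammaInt p q u) = cutPos p q x y u + 1 ∨
      gammaInt p q u = y ∧ cutPos p q x y u + 1 = q := by
  have hval := val_gammaInt hu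
  have hmem := gammaInt_mem hu
  simp only [intSet, Set.mem_ofPred_eq] at hy hu hmem
  rw [Fin.ext_iff]
  unfold cutPos
  split_ifs <;> omega

theorem rotOn_gammaExt (hx : x ∈ extSet p q) (hy : y ∈ intSet p q) :
    RotOn (cutPos p q x y) (extSet p q) (gammaExt p q) := by
  refine rotOn_of_succ_or_wrap (cutPos_injective hx hy) (fun _ => gammaExt_mem) fun u hu => ?_
  refine (cutPos_gammaExt hx hu).imp And.right fun ⟨hux, hq⟩ v hv => ?_
  have := (cutPos_lt_iff hx hy).not.2 (notMem_intSet.2 hv)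
  have := cutPos_lt (x := x) (y := y) (u := v)
  rw [hq, hux, cutPos_left hx]
  omega

theorem rotOn_gammaInt (hx : x ∈ extSet p q) (hy : y ∈ intSet p q) :
    RotOn (cutPos p q x y) (intSet p q) (gammaInt p q) := by
  refine rotOn_of_succ_or_wrap (cutPos_injective hx hy) (fun _ => gammaInt_mem) fun u hu => ?_
  refine (cutPos_gammaInt hy hu).imp_right fun ⟨huy, _⟩ v hv => ?_
  have := (cutPos_lt_iff hx hy).2 hv
  rw [huy, cutPos_right hy]
  omega

theorem rotOn_gammaAnn_extSet (hx : x ∈ extSet p q) (hy : y ∈ intSet p q) :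
    RotOn (cutPos p q x y) (extSet p q) (gammaAnn p q) :=
  (rotOn_gammaExt hx hy).congr fun _ hu => (gammaAnn_apply_of_mem_extSet hu).symm

theorem rotOn_gammaAnn_intSet (hx : x ∈ extSet p q) (hy : y ∈ intSet p q) :
    RotOn (cutPos p q x y) (intSet p q) (gammaAnn p q) :=
  (rotOn_gammaInt hx hy).congr fun _ hu => (gammaAnn_apply_of_mem_intSet hu).symm

theorem rotOn_univ_cut (hx : x ∈ extSet p q) (hy : y ∈ intSet p q) :
    RotOn (cutPos p q x y) Set.univ ⇑(gammaAnn p q * swap x ((gammaAnn p q)⁻¹ y)) := by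
  refine rotOn_of_succ_or_wrap (cutPos_injective hx hy) (Set.mapsTo_univ _ _) fun u _ => ?_
  rw [mul_apply]
  rcases eq_or_ne u x with rfl | hux
  · rw [swap_apply_left, Perm.inv_def, apply_symm_apply, cutPos_left hx, cutPos_right hy]
    exact .inr fun v _ => ⟨zero_le, Nat.le_sub_one_of_lt cutPos_lt⟩
  rcases eq_or_ne u ((gammaAnn p q)⁻¹ y) with hu | huy
  · have hint : u ∈ intSet p q := by
      rw [← notMem_extSet]
      intro hext
      rw [eq_inv_iff_eq, gammaAnn_apply_of_mem_extSet hext] at hu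
      exact notMem_extSet.2 hy (hu ▸ gammaExt_mem hext)
    have hq : cutPos p q x y u + 1 = q := by
      rw [eq_inv_iff_eq, gammaAnn_apply_of_mem_intSet hint] at hu
      refine (cutPos_gammaInt hy hint).elim (fun h => ?_) And.right
      rw [hu, cutPos_right hy] at h
      omega
    rw [hu, swap_apply_right, ← hu, gammaAnn_apply_of_mem_extSet hx, hq]
    exact .inl ((cutPos_gammaExt hx hx).resolve_left fun h => h.1 rfl).2
  · rw [swap_apply_of_ne_of_ne hux huy]
    rw [ne_eq, eq_inv_iff_eq] at huy
    by_cases hext : u ∈ extSet p q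
    · rw [gammaAnn_apply_of_mem_extSet hext]
      exact .inl ((cutPos_gammaExt hx hext).resolve_right fun h => hux h.1).2
    · rw [notMem_extSet] at hext
      rw [gammaAnn_apply_of_mem_intSet hext] at huy ⊢
      exact .inl ((cutPos_gammaInt hy hext).resolve_right fun h => huy h.1)

theorem cutPos_gammaExt_pow (hx : x ∈ extSet p q) {k : ℕ} (hk : k + 1 < p) :
    (gammaExt p q ^ (k + 1)) x ∈ extSet p q ∧
      cutPos p q x y ((gammaExt p q ^ (k + 1)) x) = q + k := by
  induction k with
  | zero =>
    rw [zero_add, pow_one]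
    exact ⟨gammaExt_mem hx, ((cutPos_gammaExt hx hx).resolve_left fun h => h.1 rfl).2⟩
  | succ k ih =>
    obtain ⟨hmem, hval⟩ := ih (by omega)
    rw [pow_succ', mul_apply]
    refine ⟨gammaExt_mem hmem, ?_⟩
    rcases cutPos_gammaExt (y := y) hx hmem with ⟨-, h⟩ | ⟨h, -⟩
    · rw [h, hval, add_assoc]
    · rw [h, cutPos_left hx] at hval
      omega

theorem cutPos_gammaInt_pow (hy : y ∈ intSet p q) {k : ℕ} (hk : k < q) :
    (gammaInt p q ^ k) y ∈ intSet p q ∧ cutPos p q x y ((gammaInt p q ^ k) y) = k := by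
  induction k with
  | zero => exact ⟨hy, cutPos_right hy⟩
  | succ k ih =>
    obtain ⟨hmem, hval⟩ := ih (by omega)
    rw [pow_succ', mul_apply]
    refine ⟨gammaInt_mem hmem, ?_⟩
    rcases cutPos_gammaInt (x := x) hy hmem with h | ⟨-, h⟩
    · rw [h, hval]
    · omega

theorem rotOn_lamPerm (hx : x ∈ extSet p q) (hy : y ∈ intSet p q) :
    RotOn (cutPos p q x y) {u | u ≠ x ∧ u ≠ y} (lamPerm p q x y) := by
  set lext := (List.range (p - 1)).map fun k => (gammaExt p q ^ (k + 1)) x with hlext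
  set lint := (List.range (q - 1)).map fun k => (gammaInt p q ^ (k + 1)) y with hlint
  have hp : 0 < p := lt_of_le_of_lt (Nat.zero_le _) hx
  have hq : 0 < q := by have : p ≤ (y : ℕ) := hy; omega
  have hmapext : lext.map (cutPos p q x y) = List.range' (1 + (q - 1)) (p - 1) := by
    rw [hlext, List.map_map, List.range'_eq_map_range]
    refine List.map_congr_left fun k hk => ?_
    have := List.mem_range.1 hk
    rw [Function.comp_apply, (cutPos_gammaExt_pow hx (by omega)).2]
    omega
  have hmapint : lint.map (cutPos p q x y) = List.range' 1 (q - 1) := by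
    rw [hlint, List.map_map, List.range'_eq_map_range]
    refine List.map_congr_left fun k hk => ?_
    have := List.mem_range.1 hk
    rw [Function.comp_apply, (cutPos_gammaInt_pow hy (by omega)).2, add_comm]
  have hmap : (lint ++ lext).map (cutPos p q x y) = List.range' 1 (q - 1 + (p - 1)) := by
    rw [List.map_append, hmapint, hmapext, List.range'_append_1]
  have hlam : lamPerm p q x y = (lint ++ lext).formPerm := by
    rw [← List.formPerm_rotate _ (.of_map _ (hmap ▸ List.nodup_range')) lint.length,
      List.rotate_append_length_eq, lamPerm]
  have hset : {u | u ≠ x ∧ u ≠ y} = {u | u ∈ lint ++ lext} := by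
    ext u
    have := cutPos_lt (x := x) (y := y) (u := u)
    rw [Set.mem_ofPred_eq, Set.mem_ofPred_eq,
      mem_iff_of_map_eq_range' (cutPos_injective hx hy) hmap,
      ← (cutPos_injective hx hy).ne_iff, ← (cutPos_injective hx hy).ne_iff (y := y),
      cutPos_left hx, cutPos_right hy]
    omega
  rw [hlam, hset]
  exact rotOn_formPerm (cutPos_injective hx hy) hmap

end Annulus

section AnnulusEquality

variable {p q : ℕ} {τ : Perm (Fin (p + q))} {a b x y : Fin (p + q)}

theorem numOrbits_inv_mul_gammaAnn_cut (hx : x ∈ extSet p q) (hτx : τ x ∈ intSet p q) :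
    numOrbits (τ⁻¹ * (gammaAnn p q * swap x ((gammaAnn p q)⁻¹ (τ x)))) =
      numOrbits (τ⁻¹ * gammaAnn p q) + 1 := by
  refine numOrbits_inv_mul_cut fun h => notMem_extSet.2 hτx ?_
  rw [h, gammaAnn_apply_of_mem_extSet hx]
  exact gammaExt_mem hx

theorem numOrbits_add_le_of_exit (hx : x ∈ extSet p q) (hτx : τ x ∈ intSet p q) :
    numOrbits τ + numOrbits (τ⁻¹ * gammaAnn p q) ≤ p + q := by
  have : Nonempty (Fin (p + q)) := ⟨x⟩
  have hcut := numOrbits_inv_mul_gammaAnn_cut hx hτx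
  have hone := (rotOn_univ_cut hx hτx).numOrbits_eq_one
  have hle := numOrbits_add_le τ (τ⁻¹ * (gammaAnn p q * swap x ((gammaAnn p q)⁻¹ (τ x))))
  rw [mul_inv_cancel_left, hone, Nat.card_fin] at hle
  omega

theorem numOrbits_eq_iff_isNoncrossing_cut (hx : x ∈ extSet p q) (hτx : τ x ∈ intSet p q) :
    numOrbits τ + numOrbits (τ⁻¹ * gammaAnn p q) = p + q ↔
      IsNoncrossing (cutPos p q x (τ x)) τ := by
  have : Nonempty (Fin (p + q)) := ⟨x⟩
  rw [← numOrbits_eq_iff_isNoncrossing (cutPos_injective hx hτx) (rotOn_univ_cut hx hτx),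
    numOrbits_inv_mul_gammaAnn_cut hx hτx, Nat.card_fin, ← add_assoc, add_left_inj]

theorem IsNoncrossing.annStandard (hx : x ∈ extSet p q) (hy : y ∈ intSet p q)
    (hτ : IsNoncrossing (cutPos p q x y) τ) : AnnStandard p q τ := by
  have hrot := hτ.rotOn (cutPos_injective hx hy)
  have hlt (u) := cutPos_lt_iff (u := u) hx hy
  have hle (u) : q ≤ cutPos p q x y u ↔ u ∈ extSet p q := by
    rw [← notMem_intSet, ← hlt, not_lt]
  refine ⟨?_, ?_⟩
  · rintro _ ⟨e, rfl⟩
    exact ⟨fun b hb => (hrot e).induced_eq (rotOn_gammaExt hx hy) Set.inter_subset_left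
      Set.inter_subset_right hb, fun b hb => (hrot e).induced_eq (rotOn_gammaInt hx hy)
      Set.inter_subset_left Set.inter_subset_right hb⟩
  · rintro _ ⟨e, rfl⟩ ⟨u, heu, hu⟩ ⟨v, hev, hv⟩
    obtain ⟨a, hua, ha, hτa⟩ := exists_mem_apply_notMem (heu.symm.trans hev) hu (notMem_extSet.2 hv)
    obtain ⟨b, hvb, hb, hτb⟩ := exists_mem_apply_notMem (hev.symm.trans heu) hv (notMem_intSet.2 hu)
    rw [notMem_extSet] at hτa
    rw [notMem_intSet] at hτb
    refine ⟨⟨a, ⟨⟨heu.trans hua, ha⟩, hτa⟩, fun c hc => ?_⟩,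
      ⟨b, ⟨⟨hev.trans hvb, hb⟩, hτb⟩, fun c hc => ?_⟩⟩
    · refine (hrot e).eq_of_cross (t := q) hc.1.1 (heu.trans hua) (.inl ?_)
      simp only [hlt, hle]
      exact ⟨⟨hc.1.2, ha⟩, hc.2, hτa⟩
    · refine (hrot e).eq_of_cross (t := q) hc.1.1 (hev.trans hvb) (.inr ?_)
      simp only [hlt, hle]
      exact ⟨⟨hc.1.2, hb⟩, hc.2, hτb⟩

theorem MapsCyc4.cyc_of_gammaAnn {c d : Fin (p + q)} (hx : x ∈ extSet p q) (hy : y ∈ intSet p q)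
    (hca : c ≠ a) (hcb : c ≠ b) (had : a ≠ d) (h : MapsCyc4 (gammaAnn p q) {a, b, c, d} a b c d) :
    Cyc (cutPos p q x y) a b c ∧ Cyc (cutPos p q x y) c d a := by
  have hab : (gammaAnn p q).SameCycle a b := h.1 ▸ sameCycle_induced (by simp)
  have hac : (gammaAnn p q).SameCycle a c := hab.trans (h.2.1 ▸ sameCycle_induced (by simp))
  have had' : (gammaAnn p q).SameCycle a d := hac.trans (h.2.2.1 ▸ sameCycle_induced (by simp))
  have hsub (D : Set (Fin (p + q))) (hD : Set.MapsTo (gammaAnn p q) D D) (ha : a ∈ D) :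
      {a, b, c, d} ⊆ D := by
    rintro u (rfl | rfl | rfl | rfl)
    exacts [ha, sameCycle_induction hD hab ha, sameCycle_induction hD hac ha,
      sameCycle_induction hD had' ha]
  by_cases ha : a ∈ extSet p q
  · have hrot := rotOn_gammaAnn_extSet hx hy
    exact (mapsCyc4_iff_cyc hrot (hsub _ hrot.mapsTo ha) hca hcb had).1 h
  · have hrot := rotOn_gammaAnn_intSet hx hy
    exact (mapsCyc4_iff_cyc hrot (hsub _ hrot.mapsTo (notMem_extSet.1 ha)) hca hcb had).1 h

theorem IsNoncrossing.not_AC1 (hx : x ∈ extSet p q) (hy : y ∈ intSet p q)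
    (hτ : IsNoncrossing (cutPos p q x y) τ) : ¬ AC1 p q τ := by
  rintro ⟨a, b, c, d, hne, hγ, hac, hca, hbd, -⟩
  simp only [List.pairwise_cons, List.mem_cons, List.not_mem_nil, or_false, forall_eq_or_imp,
    forall_eq] at hne
  obtain ⟨⟨hab, hne_ac, had⟩, ⟨hbc, -⟩, -⟩ := hne
  refine hτ.not_cross (cutPos_injective hx hy) (hac ▸ sameCycle_induced (by simp))
    (hbd ▸ sameCycle_induced (by simp)) (fun h => ?_)
    (hγ.cyc_of_gammaAnn hx hy hne_ac.symm hbc.symm had)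
  exact (eq_or_eq_of_induced_eq (by simp) (by simp) hac (.inl hca) (by simp) h).elim hab.symm hbc

-- Rerouting `τ` so that `x ↦ y` splits the orbit of `x` or does nothing, hence preserves equality.
theorem isNoncrossing_mul_swap_of_numOrbits_eq (hx : x ∈ extSet p q) (hy : y ∈ intSet p q)
    (hxy : τ.SameCycle x y) (h : numOrbits τ + numOrbits (τ⁻¹ * gammaAnn p q) = p + q) :
    IsNoncrossing (cutPos p q x y) (τ * swap x (τ⁻¹ y)) := by
  set τ' := τ * swap x (τ⁻¹ y) with hτ'
  have hτ'x : τ' x = y := by simp [hτ']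
  rw [← hτ'x] at hy ⊢
  rw [← numOrbits_eq_iff_isNoncrossing_cut hx hy]
  refine (numOrbits_add_le_of_exit hx hy).antisymm ?_
  rcases eq_or_ne x (τ⁻¹ y) with hxτ | hxτ
  · have hττ' : τ' = τ := by rw [hτ', ← hxτ, swap_self, ← Perm.one_def, mul_one]
    rw [hττ', h]
  · have hsplit : numOrbits τ' = numOrbits τ + 1 := numOrbits_mul_swap_of_sameCycle hxτ (by simpa)
    have hinv : τ'⁻¹ * gammaAnn p q = swap x (τ⁻¹ y) * (τ⁻¹ * gammaAnn p q) := by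
      rw [hτ', mul_inv_rev, swap_inv, mul_assoc]
    have hmerge := numOrbits_le_swap_mul (σ := τ⁻¹ * gammaAnn p q) (u := x) (v := τ⁻¹ y)
    rw [hinv, hsplit]
    omega

theorem MapsSwap.isNoncrossing_mul_swap {S : Set (Fin (p + q))} (hswap : MapsSwap τ S x y)
    (hxS : x ∈ S) (hx : x ∈ extSet p q) (hy : y ∈ intSet p q)
    (h : numOrbits τ + numOrbits (τ⁻¹ * gammaAnn p q) = p + q) :
    τ.SameCycle x (τ⁻¹ y) ∧ IsNoncrossing (cutPos p q x y) (τ * swap x (τ⁻¹ y)) := by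
  have hxy : τ.SameCycle x y := hswap.1 ▸ sameCycle_induced hxS
  exact ⟨sameCycle_symm_apply_right.2 hxy, isNoncrossing_mul_swap_of_numOrbits_eq hx hy hxy h⟩

theorem not_AC2_of_numOrbits_eq (h : numOrbits τ + numOrbits (τ⁻¹ * gammaAnn p q) = p + q) :
    ¬ AC2 p q τ := by
  rintro ⟨a, b, c, x, y, hne, hx, hy, hlam, ⟨hac, hcb, -⟩, hswap⟩
  simp only [List.pairwise_cons, List.mem_cons, List.not_mem_nil, or_false, forall_eq_or_imp,
    forall_eq] at hne
  obtain ⟨⟨hab, hne_ac, hax, hay⟩, ⟨hbc, hbx, hby⟩, ⟨hcx, hcy⟩, -⟩ := hne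
  obtain ⟨hxy, hnc⟩ := hswap.isNoncrossing_mul_swap (by simp) hx hy h
  have hxa : ¬ τ.SameCycle x a := fun hxa =>
    (hswap.eq_or_eq (by simp) (by simp) (by simp) hxa).elim hax hay
  have hrot : RotOn (cutPos p q x y) {u | τ.SameCycle a u} τ := by
    have hrot := hnc.rotOn (cutPos_injective hx hy) a
    simp only [sameCycle_mul_swap_iff hxy hxa] at hrot
    exact hrot.congr fun u hau =>
      mul_swap_apply_of_not_sameCycle hxy fun hxu => hxa (hxu.trans hau.symm)
  have hSCc : τ.SameCycle a c := hac ▸ sameCycle_induced (by simp)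
  have hSCb : τ.SameCycle a b := hSCc.trans (hcb ▸ sameCycle_induced (by simp))
  have hacb : Cyc (cutPos p q x y) a c b := by
    have hnext := (hrot.isNext_induced_inter (S := {a, b, c, x, y}) (a := a) (by simp) .rfl).2 b
      ⟨by simp, hSCb⟩
    rw [hac] at hnext
    exact hnext.resolve_left hab.symm |>.resolve_left hbc
  have hsub : {a, b, c} ⊆ {u | u ≠ x ∧ u ≠ y} := by
    rintro u (rfl | rfl | rfl)
    exacts [⟨hax, hay⟩, ⟨hbx, hby⟩, ⟨hcx, hcy⟩]
  exact hacb.not_swap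
    ((mapsCyc3_iff_cyc (rotOn_lamPerm hx hy) hsub hne_ac.symm hbc.symm).1 hlam)

theorem not_AC3_of_numOrbits_eq (h : numOrbits τ + numOrbits (τ⁻¹ * gammaAnn p q) = p + q) :
    ¬ AC3 p q τ := by
  rintro ⟨a, b, c, d, x, y, hne, hx, hy, hlam, ⟨hac, hca, hbd, -⟩, hswap⟩
  simp only [List.pairwise_cons, List.mem_cons, List.not_mem_nil, or_false, forall_eq_or_imp,
    forall_eq] at hne
  obtain ⟨⟨hab, hne_ac, had, hax, hay⟩, ⟨hbc, -, hbx, hby⟩, ⟨-, hcx, hcy⟩, ⟨hdx, hdy⟩, -⟩ := hne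
  obtain ⟨hxy, hnc⟩ := hswap.isNoncrossing_mul_swap (by simp) hx hy h
  have hx_iso (u) (hu : u ∈ ({a, b, c, d, x, y} : Set _)) (hux : u ≠ x) (huy : u ≠ y) :
      ¬ τ.SameCycle x u := fun hxu =>
    (hswap.eq_or_eq (by simp) (by simp) hu hxu).elim hux huy
  have hxa := hx_iso a (by simp) hax hay
  have hxb := hx_iso b (by simp) hbx hby
  have hSCac : τ.SameCycle a c := hac ▸ sameCycle_induced (by simp)
  have hSCbd : τ.SameCycle b d := hbd ▸ sameCycle_induced (by simp)
  have hSCab : ¬ τ.SameCycle a b := fun h =>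
    (eq_or_eq_of_induced_eq (by simp) (by simp) hac (.inl hca) (by simp) h).elim hab.symm hbc
  have hsub : {a, b, c, d} ⊆ {u | u ≠ x ∧ u ≠ y} := by
    rintro u (rfl | rfl | rfl | rfl)
    exacts [⟨hax, hay⟩, ⟨hbx, hby⟩, ⟨hcx, hcy⟩, ⟨hdx, hdy⟩]
  refine hnc.not_cross (cutPos_injective hx hy) ((sameCycle_mul_swap_iff hxy hxa).2 hSCac)
    ((sameCycle_mul_swap_iff hxy hxb).2 hSCbd) ((sameCycle_mul_swap_iff hxy hxa).not.2 hSCab) ?_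
  exact (mapsCyc4_iff_cyc (rotOn_lamPerm hx hy) hsub hne_ac.symm hbc.symm had).1 hlam

end AnnulusEquality

section AnnularNoncrossing

variable {p q : ℕ} {τ : Perm (Fin (p + q))} {a b c d e x y z w : Fin (p + q)}

theorem ne_of_mem_extSet_of_mem_intSet (hx : x ∈ extSet p q) (hy : y ∈ intSet p q) : x ≠ y :=
  fun h => notMem_extSet.2 hy (h ▸ hx)

theorem ac1_of_cyc (hx : x ∈ extSet p q) (hy : y ∈ intSet p q)
    (hside : {a, b, c, d} ⊆ extSet p q ∨ {a, b, c, d} ⊆ intSet p q)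
    (habc : Cyc (cutPos p q x y) a b c) (hcda : Cyc (cutPos p q x y) c d a)
    (hac : τ.SameCycle a c) (hbd : τ.SameCycle b d) (hab : ¬ τ.SameCycle a b) : AC1 p q τ := by
  obtain ⟨hne_ab, hbc, hca⟩ := habc.ne
  obtain ⟨hcd, hda, -⟩ := hcda.ne
  have hbd' : b ≠ d := by rintro rfl; exact habc.not_swap hcda.rotate.rotate
  refine ⟨a, b, c, d, by simp [*, hca.symm, hda.symm], ?_,
    mapsSwap2_of_sameCycle subset_rfl hca hbd'.symm hac hbd hab fun u hu _ => hu⟩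
  rcases hside with hext | hint
  · exact (mapsCyc4_iff_cyc (rotOn_gammaAnn_extSet hx hy) hext hca hbc.symm hda.symm).2 ⟨habc, hcda⟩
  · exact (mapsCyc4_iff_cyc (rotOn_gammaAnn_intSet hx hy) hint hca hbc.symm hda.symm).2 ⟨habc, hcda⟩

theorem ac2_of_cyc (hx : x ∈ extSet p q) (hy : y ∈ intSet p q) (hxy : τ.SameCycle x y)
    (hcyc : Cyc (cutPos p q x y) z w (τ z)) (hzw : τ.SameCycle z w) (hxz : ¬ τ.SameCycle x z) :
    AC2 p q τ := by
  obtain ⟨hne_zw, hwτz, hτz⟩ := hcyc.ne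
  have hzτz : τ.SameCycle z (τ z) := SameCycle.rfl.apply_right
  have hne (u) (hzu : τ.SameCycle z u) : u ≠ x ∧ u ≠ y :=
    ⟨fun h => hxz (h ▸ hzu.symm), fun h => hxz (hxy.trans (h ▸ hzu.symm))⟩
  have hxy' := ne_of_mem_extSet_of_mem_intSet hx hy
  have hdistinct : List.Pairwise (· ≠ ·) [z, w, τ z, x, y] := by
    simp [hne_zw, hwτz, hτz.symm, hxy', hne _ hzw, hne _ hzτz, hne z .rfl]
  refine ⟨z, w, τ z, x, y, hdistinct, hx, hy, ?_, ?_, ?_⟩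
  · refine (mapsCyc3_iff_cyc (rotOn_lamPerm hx hy) ?_ hτz hwτz.symm).2 hcyc
    rintro u (rfl | rfl | rfl)
    exacts [hne _ .rfl, hne _ hzw, hne _ hzτz]
  · refine mapsCyc3_of_sameCycle (by simp) (by simp) (by simp) hne_zw.symm hwτz rfl hzw ?_
    rintro u (rfl | rfl | rfl | rfl | rfl) hzu
    exacts [.inl rfl, .inr (.inr rfl), .inr (.inl rfl), ((hne _ hzu).1 rfl).elim,
      ((hne _ hzu).2 rfl).elim]
  · refine mapsSwap_of_sameCycle (by simp) (by simp) hxy' hxy ?_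
    rintro u (rfl | rfl | rfl | rfl | rfl) hxu
    exacts [(hxz hxu).elim, (hxz (hxu.trans hzw.symm)).elim, (hxz (hxu.trans hzτz.symm)).elim,
      .inl rfl, .inr rfl]

theorem ac3_of_cyc (hx : x ∈ extSet p q) (hy : y ∈ intSet p q) (hxy : τ.SameCycle x y)
    (habc : Cyc (cutPos p q x y) a b c) (hcda : Cyc (cutPos p q x y) c d a)
    (hac : τ.SameCycle a c) (hbd : τ.SameCycle b d) (hab : ¬ τ.SameCycle a b)
    (hxa : ¬ τ.SameCycle x a) (hxb : ¬ τ.SameCycle x b) : AC3 p q τ := by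
  obtain ⟨hne_ab, hbc, hca⟩ := habc.ne
  obtain ⟨hcd, hda, -⟩ := hcda.ne
  have hbd' : b ≠ d := by rintro rfl; exact habc.not_swap hcda.rotate.rotate
  have hxc : ¬ τ.SameCycle x c := fun h => hxa (h.trans hac.symm)
  have hxd : ¬ τ.SameCycle x d := fun h => hxb (h.trans hbd.symm)
  have hne (u) (hxu : ¬ τ.SameCycle x u) : u ≠ x ∧ u ≠ y :=
    ⟨fun h => hxu (h ▸ .rfl), fun h => hxu (h ▸ hxy)⟩
  have hxy' := ne_of_mem_extSet_of_mem_intSet hx hy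
  refine ⟨a, b, c, d, x, y, by simp [*, hca.symm, hda.symm], hx, hy, ?_, ?_, ?_⟩
  · refine (mapsCyc4_iff_cyc (rotOn_lamPerm hx hy) ?_ hca hbc.symm hda.symm).2 ⟨habc, hcda⟩
    rintro u (rfl | rfl | rfl | rfl)
    exacts [hne _ hxa, hne _ hxb, hne _ hxc, hne _ hxd]
  · refine mapsSwap2_of_sameCycle (by grind) hca hbd'.symm hac hbd hab ?_
    rintro u hu habu
    have hxu : ¬ τ.SameCycle x u := fun hxu =>
      habu.elim (fun h => hxa (hxu.trans h.symm)) fun h => hxb (hxu.trans h.symm)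
    simp_all
  · refine mapsSwap_of_sameCycle (by simp) (by simp) hxy' hxy ?_
    rintro u (rfl | rfl | rfl | rfl | rfl | rfl) hxu
    exacts [(hxa hxu).elim, (hxb hxu).elim, (hxc hxu).elim, (hxd hxu).elim, .inl rfl, .inr rfl]

theorem cyc_cutPos_recut (hx : x ∈ extSet p q) (hy : y ∈ intSet p q) (hd : d ∈ extSet p q)
    (hb : b ∈ intSet p q) (hdx : d ≠ x) (hby : b ≠ y)
    (hba : cutPos p q x y b < cutPos p q x y a) (had : cutPos p q x y a < cutPos p q x y d) :
    Cyc (cutPos p q d b) x a y := by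
  simp only [extSet, intSet, Set.mem_ofPred_eq, ne_eq, Fin.ext_iff] at *
  unfold Cyc cutPos at *
  split_ifs at * <;> omega

theorem AnnStandard.isNext_induced_extSet (hτ : AnnStandard p q τ) (hx : x ∈ extSet p q)
    (hy : y ∈ intSet p q) (ha : a ∈ {u | τ.SameCycle e u} ∩ extSet p q) :
    IsNext (cutPos p q x y) ({u | τ.SameCycle e u} ∩ extSet p q) a
      (induced τ ({u | τ.SameCycle e u} ∩ extSet p q) a) := by
  rw [(hτ.1 _ ⟨e, rfl⟩).1 a ha]
  exact (rotOn_gammaExt hx hy).isNext_induced Set.inter_subset_right ha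

theorem AnnStandard.isNext_induced_intSet (hτ : AnnStandard p q τ) (hx : x ∈ extSet p q)
    (hy : y ∈ intSet p q) (ha : a ∈ {u | τ.SameCycle e u} ∩ intSet p q) :
    IsNext (cutPos p q x y) ({u | τ.SameCycle e u} ∩ intSet p q) a
      (induced τ ({u | τ.SameCycle e u} ∩ intSet p q) a) := by
  rw [(hτ.1 _ ⟨e, rfl⟩).2 a ha]
  exact (rotOn_gammaInt hx hy).isNext_induced Set.inter_subset_right ha

theorem AnnStandard.eq_of_exit (hτ : AnnStandard p q τ) (hxz : τ.SameCycle x z)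
    (hx : x ∈ extSet p q) (hτx : τ x ∈ intSet p q) (hz : z ∈ extSet p q) (hτz : τ z ∈ intSet p q) :
    z = x :=
  (hτ.2 _ ⟨x, rfl⟩ ⟨x, .rfl, hx⟩ ⟨τ x, SameCycle.rfl.apply_right, hτx⟩).1.unique
    ⟨⟨hxz, hz⟩, hτz⟩ ⟨⟨.rfl, hx⟩, hτx⟩

theorem AnnStandard.eq_of_entry (hτ : AnnStandard p q τ) (hxz : τ.SameCycle x z)
    (hx : x ∈ intSet p q) (hτx : τ x ∈ extSet p q) (hz : z ∈ intSet p q) (hτz : τ z ∈ extSet p q) :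
    z = x :=
  (hτ.2 _ ⟨x, rfl⟩ ⟨τ x, SameCycle.rfl.apply_right, hτx⟩ ⟨x, .rfl, hx⟩).2.unique
    ⟨⟨hxz, hz⟩, hτz⟩ ⟨⟨.rfl, hx⟩, hτx⟩

theorem AnnStandard.induced_extSet_exit (hτ : AnnStandard p q τ) (hx : x ∈ extSet p q)
    (hτx : τ x ∈ intSet p q) (hxz : τ.SameCycle x z) (hz : z ∈ intSet p q)
    (hτz : τ z ∈ extSet p q) : induced τ ({u | τ.SameCycle x u} ∩ extSet p q) x = τ z := by
  obtain ⟨b, hxb, hb, hτb, hind⟩ := exists_induced_eq_apply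
    (S := {u | τ.SameCycle x u} ∩ extSet p q) (a := x) ⟨.rfl, hx⟩ fun h => notMem_extSet.2 hτx h.2
  have hbint : b ∈ intSet p q := notMem_extSet.1 fun h => hb ⟨hxb, h⟩
  rw [hind, hτ.eq_of_entry (hxz.symm.trans hxb) hz hτz hbint hτb.2]

theorem AnnStandard.induced_intSet_entry (hτ : AnnStandard p q τ) (hx : x ∈ extSet p q)
    (hτx : τ x ∈ intSet p q) (hxz : τ.SameCycle x z) (hz : z ∈ intSet p q)
    (hτz : τ z ∈ extSet p q) : induced τ ({u | τ.SameCycle x u} ∩ intSet p q) z = τ x := by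
  obtain ⟨b, hzb, hb, hτb, hind⟩ := exists_induced_eq_apply
    (S := {u | τ.SameCycle x u} ∩ intSet p q) (a := z) ⟨hxz, hz⟩ fun h => notMem_intSet.2 hτz h.2
  have hbext : b ∈ extSet p q := notMem_intSet.1 fun h => hb ⟨hxz.trans hzb, h⟩
  rw [hind, hτ.eq_of_exit (hxz.trans hzb) hx hτx hbext hτb.2]

theorem AnnStandard.isNext_of_mem_extSet (hτ : AnnStandard p q τ) (hx : x ∈ extSet p q)
    (hτx : τ x ∈ intSet p q) (hxz : τ.SameCycle x z) (hz : z ∈ extSet p q)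
    (hτz : τ z ∈ extSet p q) :
    IsNext (cutPos p q x (τ x)) {u | τ.SameCycle x u} z (τ z) := by
  have hpos := cutPos_injective hx hτx
  have hmax := cutPos_le_left hx (y := τ x)
  have hlt (u) := cutPos_lt_iff (u := u) hx hτx
  have hnext := hτ.isNext_induced_extSet hx hτx (e := x) ⟨hxz, hz⟩
  rw [induced_of_mem (S := {u | τ.SameCycle x u} ∩ extSet p q) ⟨hxz.apply_right, hτz⟩] at hnext
  refine ⟨hxz.apply_right, fun u hxu => ?_⟩
  by_cases hu : u ∈ extSet p q
  · exact hnext.2 u ⟨hxu, hu⟩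
  · have hnext_x := hnext.2 x ⟨.rfl, hx⟩
    have hxz' : z ≠ x := by rintro rfl; exact notMem_intSet.2 hτz hτx
    have := (hlt u).2 (notMem_extSet.1 hu)
    have := (hlt z).not.2 (notMem_intSet.2 hz)
    have := hmax z
    rw [← hpos.eq_iff, ← hpos.eq_iff (b := τ z), Cyc] at hnext_x
    rw [← hpos.ne_iff] at hxz'
    rw [← hpos.eq_iff, ← hpos.eq_iff (b := τ z), Cyc]
    omega

theorem AnnStandard.isNext_of_mem_intSet (hτ : AnnStandard p q τ) (hx : x ∈ extSet p q)
    (hτx : τ x ∈ intSet p q) (hxz : τ.SameCycle x z) (hz : z ∈ intSet p q)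
    (hτz : τ z ∈ intSet p q) :
    IsNext (cutPos p q x (τ x)) {u | τ.SameCycle x u} z (τ z) := by
  have hpos := cutPos_injective hx hτx
  have hmin := cutPos_right hτx (x := x)
  have hlt (u) := cutPos_lt_iff (u := u) hx hτx
  have hnext := hτ.isNext_induced_intSet hx hτx (e := x) ⟨hxz, hz⟩
  rw [induced_of_mem (S := {u | τ.SameCycle x u} ∩ intSet p q) ⟨hxz.apply_right, hτz⟩] at hnext
  refine ⟨hxz.apply_right, fun u hxu => ?_⟩
  by_cases hu : u ∈ intSet p q
  · exact hnext.2 u ⟨hxu, hu⟩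
  · have hnext_τx := hnext.2 (τ x) ⟨SameCycle.rfl.apply_right, hτx⟩
    have hτxz : τ x ≠ τ z := fun h => ne_of_mem_extSet_of_mem_intSet hx hz (τ.injective h)
    have := (hlt u).not.2 hu
    have := (hlt (τ z)).2 hτz
    rw [← hpos.eq_iff, ← hpos.eq_iff (b := τ z), Cyc] at hnext_τx
    rw [← hpos.ne_iff] at hτxz
    rw [← hpos.eq_iff, ← hpos.eq_iff (b := τ z), Cyc]
    omega

theorem AnnStandard.isNext_of_entry (hτ : AnnStandard p q τ) (hx : x ∈ extSet p q)
    (hτx : τ x ∈ intSet p q) (hxz : τ.SameCycle x z) (hz : z ∈ intSet p q)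
    (hτz : τ z ∈ extSet p q) :
    IsNext (cutPos p q x (τ x)) {u | τ.SameCycle x u} z (τ z) := by
  have hpos := cutPos_injective hx hτx
  have hmax := cutPos_le_left hx (y := τ x)
  have hmin := cutPos_right hτx (x := x)
  have hlt (u) := cutPos_lt_iff (u := u) hx hτx
  have hnext_x := hτ.isNext_induced_extSet hx hτx (e := x) ⟨.rfl, hx⟩
  have hnext_z := hτ.isNext_induced_intSet hx hτx (e := x) ⟨hxz, hz⟩
  rw [hτ.induced_extSet_exit hx hτx hxz hz hτz] at hnext_x
  rw [hτ.induced_intSet_entry hx hτx hxz hz hτz] at hnext_z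
  refine ⟨hxz.apply_right, fun u hxu => ?_⟩
  have := (hlt z).2 hz
  have := (hlt (τ z)).not.2 (notMem_intSet.2 hτz)
  have := hmax (τ z)
  by_cases hu : u ∈ extSet p q
  · have hnext_u := hnext_x.2 u ⟨hxu, hu⟩
    rw [← hpos.eq_iff, ← hpos.eq_iff (b := τ z), Cyc] at *
    omega
  · have hnext_u := hnext_z.2 u ⟨hxu, notMem_extSet.1 hu⟩
    rw [← hpos.eq_iff, ← hpos.eq_iff (a := u), Cyc] at *
    omega

theorem AnnStandard.rotOn (hτ : AnnStandard p q τ) (hx : x ∈ extSet p q)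
    (hτx : τ x ∈ intSet p q) : RotOn (cutPos p q x (τ x)) {u | τ.SameCycle x u} τ := by
  intro z hxz
  rcases mem_extSet_or_mem_intSet z with hz | hz <;>
    rcases mem_extSet_or_mem_intSet (τ z) with hτz | hτz
  · exact hτ.isNext_of_mem_extSet hx hτx hxz hz hτz
  · obtain rfl := hτ.eq_of_exit hxz hx hτx hz hτz
    refine ⟨SameCycle.rfl.apply_right, fun u _ => ?_⟩
    have := cutPos_le_left hx (y := τ z) u
    have := cutPos_right hτx (x := z)
    rw [← (cutPos_injective hx hτx).eq_iff, ← (cutPos_injective hx hτx).eq_iff (b := τ z), Cyc]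
    omega
  · exact hτ.isNext_of_entry hx hτx hxz hz hτz
  · exact hτ.isNext_of_mem_intSet hx hτx hxz hz hτz

theorem not_lt_and_lt_of_exit (h₁ : ¬ AC1 p q τ) (h₂ : ¬ AC2 p q τ) (hx : x ∈ extSet p q)
    (hτx : τ x ∈ intSet p q) (hxa : τ.SameCycle x a) (hbd : τ.SameCycle b d)
    (hxb : ¬ τ.SameCycle x b) :
    ¬ (cutPos p q x (τ x) b < cutPos p q x (τ x) a ∧
      cutPos p q x (τ x) a < cutPos p q x (τ x) d) := by
  rintro ⟨hba, had⟩
  have hpos := cutPos_injective hx hτx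
  have hmin := cutPos_right hτx (x := x)
  have hmax := cutPos_le_left hx (y := τ x)
  have hlt (u) := cutPos_lt_iff (u := u) hx hτx
  have hxτx : τ.SameCycle x (τ x) := SameCycle.rfl.apply_right
  have hdx : d ≠ x := by rintro rfl; exact hxb hbd.symm
  have hbτx : b ≠ τ x := by rintro rfl; exact hxb hxτx
  have hax : a ≠ x := by rintro rfl; exact had.not_ge (hmax d)
  have hcross (e) (hxe : τ.SameCycle x e) (he : e = x ∨ e = τ x)
      (hside : {e, b, a, d} ⊆ extSet p q ∨ {e, b, a, d} ⊆ intSet p q) : AC1 p q τ := by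
    have := hmax d
    rw [← hpos.ne_iff] at hdx hbτx
    refine ac1_of_cyc hx hτx hside ?_ ?_ (hxe.symm.trans hxa) hbd fun h => hxb (hxe.trans h) <;>
      rcases he with rfl | rfl <;> unfold Cyc <;> omega
  rcases mem_extSet_or_mem_intSet b with hb | hb
  · have hbq := (hlt b).not.2 (notMem_intSet.2 hb)
    have hext (u) (hbu : cutPos p q x (τ x) b ≤ cutPos p q x (τ x) u) : u ∈ extSet p q :=
      notMem_intSet.1 ((hlt u).not.1 (by omega))
    refine h₁ (hcross x .rfl (.inl rfl) (.inl ?_))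
    rintro u (rfl | rfl | rfl | rfl)
    exacts [hx, hb, hext _ hba.le, hext _ (hba.trans had).le]
  rcases mem_extSet_or_mem_intSet d with hd | hd
  · exact h₂ (ac2_of_cyc hd hb hbd.symm (cyc_cutPos_recut hx hτx hd hb hdx hbτx hba had) hxa
      fun h => hxb (hbd.trans h).symm)
  · have hdq := (hlt d).2 hd
    have ha : a ∈ intSet p q := (hlt a).1 (had.trans hdq)
    refine h₁ (hcross (τ x) hxτx (.inr rfl) (.inr ?_))
    rintro u (rfl | rfl | rfl | rfl)
    exacts [hτx, hb, ha, hd]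

theorem not_cyc_and_cyc_of_exit (h₁ : ¬ AC1 p q τ) (h₂ : ¬ AC2 p q τ) (hx : x ∈ extSet p q)
    (hτx : τ x ∈ intSet p q) (hxa : τ.SameCycle x a) (hac : τ.SameCycle a c)
    (hbd : τ.SameCycle b d) (hxb : ¬ τ.SameCycle x b) :
    ¬ (Cyc (cutPos p q x (τ x)) a b c ∧ Cyc (cutPos p q x (τ x)) c d a) := by
  rintro ⟨habc, hcda⟩
  have hc := not_lt_and_lt_of_exit h₁ h₂ hx hτx (hxa.trans hac) hbd hxb
  have ha := not_lt_and_lt_of_exit h₁ h₂ hx hτx hxa hbd.symm fun h => hxb (h.trans hbd.symm)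
  unfold Cyc at *
  omega

theorem AnnNC.isNoncrossing (h : AnnNC p q τ) (hx : x ∈ extSet p q) (hτx : τ x ∈ intSet p q) :
    IsNoncrossing (cutPos p q x (τ x)) τ := by
  obtain ⟨hτ, h₁, h₂, h₃⟩ := h
  have hpos := cutPos_injective hx hτx
  have happly (u) : τ.SameCycle u (τ u) := SameCycle.rfl.apply_right
  intro z w hzw
  by_contra hzτw
  by_cases hsame : τ.SameCycle z w
  · by_cases hxz : τ.SameCycle x z
    · rcases (hτ.rotOn hx hτx z hxz).2 w (hxz.trans hsame) with rfl | rfl | hcyc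
      exacts [not_cyc_self hzw, not_cyc_self hzw.rotate, hzw.not_swap hcyc]
    · exact h₂ (ac2_of_cyc hx hτx (happly x) hzw hsame hxz)
  have hcross : Cyc (cutPos p q x (τ x)) (τ z) (τ w) z := by
    have hτwz : τ w ≠ z := by rintro rfl; exact hsame (happly w).symm
    have hτwτz : τ w ≠ τ z := fun h => hsame (τ.injective h ▸ .rfl)
    rw [← hpos.ne_iff] at hτwz hτwτz
    unfold Cyc at *
    omega
  by_cases hxz : τ.SameCycle x z
  · exact not_cyc_and_cyc_of_exit h₁ h₂ hx hτx hxz (happly z) (happly w)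
      (fun h => hsame (hxz.symm.trans h)) ⟨hzw, hcross⟩
  by_cases hxw : τ.SameCycle x w
  · refine not_cyc_and_cyc_of_exit h₁ h₂ hx hτx hxw (happly w) (happly z).symm
      (fun h => hxz (h.trans (happly z).symm)) ?_
    unfold Cyc at *
    omega
  · exact h₃ (ac3_of_cyc hx hτx (happly x) hzw hcross (happly z) (happly w) hsame hxz hxw)

end AnnularNoncrossing

/-- Theorem 6.1 1°: a `(p,q)`-connected permutation `τ` of `[p+q]` satisfies
`#(τ) + #(τ⁻¹γ) ≤ p+q`, and `τ ∈ S_ann-nc(p,q)` iff this inequality is an equality. -/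
theorem stmt_15 (p q : ℕ) (hp : 0 < p) (hq : 0 < q)
    (τ : Equiv.Perm (Fin (p + q))) (hconn : AnnConnected p q τ) :
    numOrbits τ + numOrbits (τ⁻¹ * gammaAnn p q) ≤ p + q ∧
      (AnnNC p q τ ↔ numOrbits τ + numOrbits (τ⁻¹ * gammaAnn p q) = p + q) := by
  obtain ⟨_, ⟨e, rfl⟩, ⟨u, heu, hu⟩, ⟨v, hev, hv⟩⟩ := hconn
  obtain ⟨x, -, hx, hτx⟩ := exists_mem_apply_notMem (heu.symm.trans hev) hu (notMem_extSet.2 hv)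
  rw [notMem_extSet] at hτx
  have hiff := numOrbits_eq_iff_isNoncrossing_cut hx hτx
  refine ⟨numOrbits_add_le_of_exit hx hτx, fun h => hiff.2 (h.isNoncrossing hx hτx), fun h => ?_⟩
  have hnc := hiff.1 h
  exact ⟨hnc.annStandard hx hτx, hnc.not_AC1 hx hτx, not_AC2_of_numOrbits_eq h,
    not_AC3_of_numOrbits_eq h⟩
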